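/- In the infinite-width limit, the NTK of the linear RNN with parameters (W,F,C) initialized i.i.d. N(0,ν_W), N(0,ν_F), N(0,ν_C) converges almost surely to K(x,x') = 𝒯(x)ᵀ D(ρ) 𝒯(x') ⊗ I_{n_y}, with scale factors ρ_j = ν_C(j ν_F ν_W^{j-1} + ν_W^j) + ν_F ν_W^j. Hence the linear RNN NTK equals the NTK of a scaled 1D convolutional model with these specific scale factors. -/

import Mathlib

open MeasureTheory ProbabilityTheory Filter Matrix

/-- Hidden state of the linear RNN `h_t = (1/√n) W h_{t-1} + F x_t`, `h_{-1} = 0`. -/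
noncomputable def rnnH (n nx : ℕ) (Wm : Fin n → Fin n → ℝ)
    (Fm : Fin n → Fin nx → ℝ) (x : ℕ → Fin nx → ℝ) : ℕ → Fin n → ℝ
  | 0 => fun i => ∑ k : Fin nx, Fm i k * x 0 k
  | t + 1 => fun i =>
      (Real.sqrt n)⁻¹ * (∑ i' : Fin n, Wm i i' * rnnH n nx Wm Fm x t i') +
        ∑ k : Fin nx, Fm i k * x (t + 1) k

/-- Output `y_t = (1/√n) C h_t` of the linear RNN, as a function of the full
parameter triple `θ = (W, F, C)`. -/
noncomputable def rnnY (n nx ny : ℕ)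
    (θ : (Fin n → Fin n → ℝ) × (Fin n → Fin nx → ℝ) × (Fin ny → Fin n → ℝ))
    (x : ℕ → Fin nx → ℝ) (t : ℕ) (m : Fin ny) : ℝ :=
  (Real.sqrt n)⁻¹ * ∑ i : Fin n, θ.2.2 m i * rnnH n nx θ.1 θ.2.1 x t i

/-- The empirical NTK of the linear RNN at parameters `θ`: the sum over all scalar
parameter coordinates (entries of `W`, `F` and `C`) of the products of the partial
derivatives of the outputs. -/
noncomputable def rnnNTK (n nx ny : ℕ)
    (θ : (Fin n → Fin n → ℝ) × (Fin n → Fin nx → ℝ) × (Fin ny → Fin n → ℝ))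
    (x x' : ℕ → Fin nx → ℝ) (t s : ℕ) (m m' : Fin ny) : ℝ :=
  (∑ a : Fin n, ∑ b : Fin n,
      fderiv ℝ (fun θ' => rnnY n nx ny θ' x t m) θ
          ((fun i j => if i = a ∧ j = b then (1 : ℝ) else 0), 0, 0) *
        fderiv ℝ (fun θ' => rnnY n nx ny θ' x' s m') θ
          ((fun i j => if i = a ∧ j = b then (1 : ℝ) else 0), 0, 0)) +
  (∑ a : Fin n, ∑ k : Fin nx,
      fderiv ℝ (fun θ' => rnnY n nx ny θ' x t m) θ
          (0, (fun i j => if i = a ∧ j = k then (1 : ℝ) else 0), 0) *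
        fderiv ℝ (fun θ' => rnnY n nx ny θ' x' s m') θ
          (0, (fun i j => if i = a ∧ j = k then (1 : ℝ) else 0), 0)) +
  (∑ c : Fin ny, ∑ a : Fin n,
      fderiv ℝ (fun θ' => rnnY n nx ny θ' x t m) θ
          (0, 0, (fun i j => if i = c ∧ j = a then (1 : ℝ) else 0)) *
        fderiv ℝ (fun θ' => rnnY n nx ny θ' x' s m') θ
          (0, 0, (fun i j => if i = c ∧ j = a then (1 : ℝ) else 0)))

/-- The block Toeplitz matrix `𝒯(x)` with `(j,t)` block `x_{t-j}`. -/
def toepMat (T nx : ℕ) (x : ℕ → Fin nx → ℝ) :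
    Matrix (Fin T × Fin nx) (Fin T) ℝ :=
  Matrix.of fun p t => if (p.1 : ℕ) ≤ (t : ℕ) then x ((t : ℕ) - (p.1 : ℕ)) p.2 else 0

/-- The block diagonal scaling matrix `D(ρ)`. -/
def scaleMat (T nx : ℕ) (ρ : ℕ → ℝ) : Matrix (Fin T × Fin nx) (Fin T × Fin nx) ℝ :=
  Matrix.diagonal fun p => ρ (p.1 : ℕ)



set_option linter.unusedSectionVars false

section words
variable {n : ℕ} {R : Type*} [CommRing R] [Algebra ℝ R]

def ltr (A : Matrix (Fin n) (Fin n) R) (b : Bool) : Matrix (Fin n) (Fin n) R :=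
  if b then A else Aᵀ

def wmat (A : Matrix (Fin n) (Fin n) R) : List Bool → Matrix (Fin n) (Fin n) R
  | [] => 1
  | b :: w => ltr A b * wmat A w

def wtr (w : List Bool) : List Bool := (w.map not).reverse

theorem ltr_not (A : Matrix (Fin n) (Fin n) R) (b : Bool) : ltr A (!b) = (ltr A b)ᵀ := by
  cases b <;> simp [ltr]

theorem wmat_append (A : Matrix (Fin n) (Fin n) R) (w v : List Bool) :
    wmat A (w ++ v) = wmat A w * wmat A v := by
  induction w with
  | nil => simp [wmat]
  | cons b w ih => simp [wmat, ih, Matrix.mul_assoc]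

theorem wmat_wtr (A : Matrix (Fin n) (Fin n) R) (w : List Bool) :
    wmat A (wtr w) = (wmat A w)ᵀ := by
  induction w with
  | nil => simp [wmat, wtr]
  | cons b w ih =>
    have : wtr (b :: w) = wtr w ++ [!b] := by simp [wtr]
    rw [this, wmat_append, ih]
    simp [wmat, ltr_not, Matrix.transpose_mul]

theorem wtr_length (w : List Bool) : (wtr w).length = w.length := by simp [wtr]

/-- Derivative of a word in the direction of a letter entry. -/
theorem deriv_wmat (A : Matrix (Fin n) (Fin n) R) (d : Derivation ℝ R R) (b : Bool)
    (u v : Fin n)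
    (hd : ∀ b' x y, d (ltr A b' x y) =
      if b' = b then (1 : Matrix (Fin n) (Fin n) R) x u * (1 : Matrix (Fin n) (Fin n) R) v y
      else (1 : Matrix (Fin n) (Fin n) R) x v * (1 : Matrix (Fin n) (Fin n) R) u y)
    (w : List Bool) (x y : Fin n) :
    d (wmat A w x y) = ∑ p : Fin w.length,
      if w[p] = b then wmat A (w.take p) x u * wmat A (w.drop (p + 1)) v y
      else wmat A (w.take p) x v * wmat A (w.drop (p + 1)) u y := by
  induction w generalizing x y with
  | nil =>
    simp only [wmat]
    rw [Matrix.one_apply]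
    split <;> simp
  | cons c w ih =>
    rw [show wmat A (c :: w) x y = ∑ z, ltr A c x z * wmat A w z y by
      simp [wmat, Matrix.mul_apply]]
    rw [map_sum]
    simp only [Derivation.leibniz, smul_eq_mul, ih, hd]
    rw [Finset.sum_add_distrib]
    erw [Fin.sum_univ_succ]
    rw [add_comm]
    congr 1
    · simp only [Fin.val_zero, List.take_zero, wmat, Fin.getElem_fin, List.getElem_cons_zero]
      split
      · simp [Matrix.one_apply, mul_comm]
      · simp [Matrix.one_apply, mul_comm]
    · simp only [Finset.mul_sum]
      rw [Finset.sum_comm]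
      refine Finset.sum_congr rfl fun p _ => ?_
      simp only [Fin.getElem_fin, Fin.val_succ, List.getElem_cons_succ, List.take_succ_cons, wmat,
        List.drop_succ_cons]
      split
      · simp [Matrix.mul_apply, Finset.sum_mul, mul_assoc]
      · simp [Matrix.mul_apply, Finset.sum_mul, mul_assoc]

theorem deriv_list_prod {α : Type*} (d : Derivation ℝ R R) (f : α → R) (L : List α) :
    d (L.map f).prod = ∑ i : Fin L.length, d (f L[i]) * ((L.eraseIdx i).map f).prod := by
  induction L with
  | nil => simp
  | cons a L ih =>
    erw [Fin.sum_univ_succ]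
    simp only [List.map_cons, List.prod_cons, Derivation.leibniz, smul_eq_mul, ih, Fin.getElem_fin,
      Fin.val_zero, List.getElem_cons_zero, List.eraseIdx_cons_zero, Fin.val_succ,
      List.getElem_cons_succ, List.eraseIdx_cons_succ, Finset.mul_sum]
    rw [add_comm, mul_comm]
    congr 1
    refine Finset.sum_congr rfl fun p _ => ?_
    ring

end words

/-- Limit of normalized traces of words. -/
noncomputable def wlim (ν : ℝ) : List Bool → ℝ
  | [] => 1
  | b :: w => ν * ∑ p : Fin w.length,
      if w[p] = b then 0 else wlim ν (w.take p) * wlim ν (w.drop (p + 1))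
  termination_by w => w.length
  decreasing_by
    all_goals simp

theorem wlim_replicate (ν : ℝ) (b : Bool) (q : ℕ) :
    wlim ν (List.replicate q b) = if q = 0 then 1 else 0 := by
  cases q with
  | zero => simp [wlim]
  | succ q =>
    rw [List.replicate_succ, wlim]
    simp

theorem wlim_pq (ν : ℝ) (b : Bool) (p q : ℕ) :
    wlim ν (List.replicate p b ++ List.replicate q (!b)) = if p = q then ν ^ p else 0 := by
  induction p generalizing q with
  | zero =>
    simp only [List.replicate_zero, List.nil_append, wlim_replicate, pow_zero]
    simp [eq_comm]
  | succ p ih =>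
    rw [List.replicate_succ, List.cons_append, wlim]
    cases q with
    | zero => simp
    | succ q =>
      rw [Finset.sum_eq_single (⟨p + q, by simp⟩)]
      · have h1 : (List.replicate p b ++ List.replicate (q+1) (!b)).take (p + q)
            = List.replicate p b ++ List.replicate q (!b) := by
          simp [List.take_append]
        have h2 : (List.replicate p b ++ List.replicate (q+1) (!b)).drop (p + q + 1) = [] := by
          simp; omega
        simp only [h1, h2, ih, wlim]
        simp [pow_succ']
      · intro i _ hi
        split
        · rfl
        · rename_i h
          have hi1 : p ≤ (i : ℕ) := by
            by_contra hlt
            apply h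
            simp [List.getElem_append, not_le.mp hlt]
          have hi2 := i.2
          simp only [List.length_append, List.length_replicate] at hi2
          have hi3 : (i : ℕ) ≠ p + q := fun hh => hi (Fin.ext hh)
          have h2 : (List.replicate p b ++ List.replicate (q+1) (!b)).drop (i + 1)
            = List.replicate (p + q - i) (!b) := by
            rw [List.drop_append, List.drop_replicate, List.drop_replicate, List.length_replicate,
              show p - ((i : ℕ) + 1) = 0 by omega,
              show q + 1 - ((i : ℕ) + 1 - p) = p + q - i by omega]
            simp
          rw [h2, wlim_replicate, if_neg (by omega), mul_zero]
      · simp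


/-- Abstract Gaussian polynomial model of width `n`. -/
structure GM (n : ℕ) (K : Type) [DecidableEq K] (ν μ : ℝ) where
  R : Type
  [ring : CommRing R]
  [alg : Algebra ℝ R]
  A : Matrix (Fin n) (Fin n) R
  Y : Fin n → K → R
  DA : Fin n → Fin n → Derivation ℝ R R
  DY : Fin n → K → Derivation ℝ R R
  E : R →ₗ[ℝ] ℝ
  DA_A : ∀ u v x y, DA u v (A x y) =
    (1 : Matrix (Fin n) (Fin n) R) x u * (1 : Matrix (Fin n) (Fin n) R) v y
  DY_A : ∀ a k x y, DY a k (A x y) = 0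
  DY_Y : ∀ a k b l, DY a k (Y b l) = (if k = l then 1 else 0) * (1 : Matrix (Fin n) (Fin n) R) a b
  E_one : E 1 = 1
  E_A : ∀ u v P, E (A u v * P) = ν / n * E (DA u v P)
  E_Y : ∀ a k P, E (Y a k * P) = μ * E (DY a k P)

attribute [instance] GM.ring GM.alg

namespace GM

variable {n : ℕ} {K : Type} [DecidableEq K] {ν μ : ℝ} (M : GM n K ν μ)

def DL (b : Bool) (u v : Fin n) : Derivation ℝ M.R M.R := if b then M.DA u v else M.DA v u

theorem DL_ltr (b : Bool) (u v : Fin n) (b' : Bool) (x y : Fin n) :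
    M.DL b u v (ltr M.A b' x y) =
      if b' = b then (1 : Matrix (Fin n) (Fin n) M.R) x u * (1 : Matrix (Fin n) (Fin n) M.R) v y
      else (1 : Matrix (Fin n) (Fin n) M.R) x v * (1 : Matrix (Fin n) (Fin n) M.R) u y := by
  have hc : ∀ a b : Fin n, (1 : Matrix (Fin n) (Fin n) M.R) a b
    = (1 : Matrix (Fin n) (Fin n) M.R) b a := fun a b => by simp [Matrix.one_apply, eq_comm]
  cases b <;> cases b' <;> simp [DL, ltr, M.DA_A]
  · rw [mul_comm, hc u x, hc y v]
  · rw [mul_comm, hc v x, hc y u]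

theorem E_ltr (b : Bool) (u v : Fin n) (P : M.R) :
    M.E (ltr M.A b u v * P) = ν / n * M.E (M.DL b u v P) := by
  cases b <;> simp [DL, ltr, M.E_A]

/-- normalized trace of a word -/
noncomputable def t (w : List Bool) : M.R := (n : ℝ)⁻¹ • Matrix.trace (wmat M.A w)

/-- centered normalized trace of a word -/
noncomputable def tc (w : List Bool) : M.R := M.t w - algebraMap ℝ M.R (wlim ν w)

theorem sum_DL_wmat (b : Bool) (w : List Bool) :
    ∑ u, ∑ v, M.DL b u v (wmat M.A w v u) = ∑ p : Fin w.length,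
      if w[p] = b then Matrix.trace (wmat M.A (wtr (w.take p) ++ w.drop (p + 1)))
      else Matrix.trace (wmat M.A (w.take p)) * Matrix.trace (wmat M.A (w.drop (p + 1))) := by
  simp only [fun u v => deriv_wmat M.A (M.DL b u v) b u v (M.DL_ltr b u v) w v u]
  simp only [Finset.sum_comm (t := (Finset.univ : Finset (Fin w.length)))]
  refine Finset.sum_congr rfl fun p _ => ?_
  split
  · simp [wmat_append, wmat_wtr, Matrix.trace, Matrix.mul_apply]
  · simp [Matrix.trace, Finset.sum_mul_sum]
    rw [Finset.sum_comm]

theorem sum_DL_t (b : Bool) (w w2 : List Bool) :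
    ∑ u, ∑ v, wmat M.A w v u * M.DL b u v (M.t w2) = ∑ q : Fin w2.length,
      if w2[q] = b then M.t (wtr w ++ (w2.drop (q + 1) ++ w2.take q))
      else M.t (w ++ (w2.drop (q + 1) ++ w2.take q)) := by
  simp only [t, Derivation.map_smul, Matrix.trace, map_sum, Matrix.diag_apply]
  simp only [fun u v x => deriv_wmat M.A (M.DL b u v) b u v (M.DL_ltr b u v) w2 x x]
  simp only [Algebra.mul_smul_comm, ← Finset.smul_sum, ← smul_ite]
  congr 1
  simp only [Finset.sum_comm (t := (Finset.univ : Finset (Fin w2.length))), Finset.mul_sum]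
  refine Finset.sum_congr rfl fun p _ => ?_
  split
  · simp only [wmat_append, wmat_wtr, Matrix.mul_apply, Matrix.transpose_apply, Finset.mul_sum]
    refine Finset.sum_congr rfl fun u _ => Finset.sum_congr rfl fun v _ =>
      Finset.sum_congr rfl fun x _ => ?_
    ring
  · simp only [wmat_append, Matrix.mul_apply, Finset.mul_sum]
    rw [Finset.sum_comm]
    refine Finset.sum_congr rfl fun u _ => Finset.sum_congr rfl fun v _ =>
      Finset.sum_congr rfl fun x _ => ?_
    ring

theorem E_t_cons (b : Bool) (w : List Bool) (P : M.R) :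
    M.E (M.t (b :: w) * P) = ν * (∑ p : Fin w.length,
      if w[p] = b then (n : ℝ)⁻¹ * M.E (M.t (wtr (w.take p) ++ w.drop (p + 1)) * P)
      else M.E (M.t (w.take p) * M.t (w.drop (p + 1)) * P))
      + ν * (n : ℝ)⁻¹ ^ 2 * M.E (∑ u, ∑ v, wmat M.A w v u * M.DL b u v P) := by
  have h1 : M.E (M.t (b :: w) * P) = (n : ℝ)⁻¹ * ∑ u, ∑ v, ν / n *
      (M.E (M.DL b u v (wmat M.A w v u) * P) + M.E (wmat M.A w v u * M.DL b u v P)) := by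
    simp only [t, Matrix.trace, wmat, Matrix.diag_apply, Matrix.mul_apply, Algebra.smul_mul_assoc,
      Finset.sum_mul, map_sum, map_smul, smul_eq_mul, mul_assoc, E_ltr, Derivation.leibniz, map_add]
    congr 1
    refine Finset.sum_congr rfl fun u _ => Finset.sum_congr rfl fun v _ => ?_
    rw [add_comm, mul_comm P]
  rw [h1]
  simp only [← Finset.mul_sum, Finset.sum_add_distrib, ← map_sum, ← Finset.sum_mul]
  rw [M.sum_DL_wmat]
  simp only [map_sum, Finset.sum_mul, mul_add, Finset.mul_sum]
  congr 1
  · refine Finset.sum_congr rfl fun p _ => ?_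
    split
    · simp [t]; ring
    · simp [t]; ring
  · refine Finset.sum_congr rfl fun u _ => Finset.sum_congr rfl fun v _ => ?_
    ring

theorem sum_DL_prod (b : Bool) (w : List Bool) (L : List (List Bool)) :
    ∑ u, ∑ v, wmat M.A w v u * M.DL b u v (L.map M.tc).prod = ∑ i : Fin L.length,
      ∑ q : Fin L[i].length,
      (if (L[i])[q] = b then M.t (wtr w ++ (L[i].drop (q + 1) ++ L[i].take q))
      else M.t (w ++ (L[i].drop (q + 1) ++ L[i].take q))) * ((L.eraseIdx i).map M.tc).prod := by
  simp only [deriv_list_prod, Finset.mul_sum]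
  simp only [Finset.sum_comm (t := (Finset.univ : Finset (Fin L.length)))]
  refine Finset.sum_congr rfl fun i _ => ?_
  rw [← Finset.sum_mul, ← sum_DL_t]
  simp only [Finset.sum_mul, mul_assoc, tc, map_sub, Derivation.map_algebraMap, sub_zero]

theorem E_tc_cons (b : Bool) (w : List Bool) (P : M.R) :
    M.E (M.tc (b :: w) * P) = ν * (∑ p : Fin w.length,
      if w[p] = b then (n : ℝ)⁻¹ * (M.E (M.tc (wtr (w.take p) ++ w.drop (p + 1)) * P)
        + wlim ν (wtr (w.take p) ++ w.drop (p + 1)) * M.E P)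
      else M.E (M.tc (w.take p) * (M.tc (w.drop (p + 1)) * P))
        + wlim ν (w.take p) * M.E (M.tc (w.drop (p + 1)) * P)
        + wlim ν (w.drop (p + 1)) * M.E (M.tc (w.take p) * P))
      + ν * (n : ℝ)⁻¹ ^ 2 * M.E (∑ u, ∑ v, wmat M.A w v u * M.DL b u v P) := by
  have h0 : ∀ v, M.t v = M.tc v + algebraMap ℝ M.R (wlim ν v) := fun v => by simp [tc]
  have h1 : M.E (M.tc (b :: w) * P) = M.E (M.t (b :: w) * P) - wlim ν (b :: w) * M.E P := by
    rw [h0, add_mul, map_add, ← Algebra.smul_def, map_smul, smul_eq_mul]; ring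
  rw [h1, E_t_cons, wlim, add_sub_right_comm, mul_assoc ν (∑ p : Fin w.length, _), ← mul_sub,
    Finset.sum_mul, ← Finset.sum_sub_distrib]
  congr 2
  refine Finset.sum_congr rfl fun p _ => ?_
  split
  · rw [h0, add_mul, map_add, ← Algebra.smul_def, map_smul, smul_eq_mul]; ring
  · rw [h0 (w.take p), h0 (w.drop (p+1))]
    have : ∀ (x y : M.R) (a c : ℝ), (x + algebraMap ℝ M.R a) * (y + algebraMap ℝ M.R c) * P
       = x * (y * P) + a • (y * P) + c • (x * P) + (a * c) • P := by
      intro x y a c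
      simp only [Algebra.smul_def, map_mul]; ring
    rw [this]
    simp only [map_add, map_smul, smul_eq_mul]; ring

end GM


namespace GM

variable {K : Type} [DecidableEq K] {ν μ : ℝ} (M : (n : ℕ) → GM n K ν μ)

/-- the small parameter -/
noncomputable def ep (n : ℕ) : ℝ := (Real.sqrt n)⁻¹

theorem ep_sq (n : ℕ) : ep n ^ 2 = (n : ℝ)⁻¹ := by
  rw [ep, inv_pow, Real.sq_sqrt (by positivity)]

theorem ep_nonneg (n : ℕ) : 0 ≤ ep n := by unfold ep; positivity

theorem ep_le_one (n : ℕ) : ep n ≤ 1 := by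
  unfold ep
  rcases Nat.eq_zero_or_pos n with h | h
  · simp [h]
  · apply inv_le_one_of_one_le₀
    rw [Real.one_le_sqrt]
    exact_mod_cast h

theorem ep_mono {r s : ℕ} (h : r ≤ s) : (fun n => ep n ^ s) =O[atTop] (fun n => ep n ^ r) := by
  refine Asymptotics.IsBigO.of_bound 1 (Eventually.of_forall fun n => ?_)
  rw [one_mul, Real.norm_of_nonneg (pow_nonneg (ep_nonneg n) _),
    Real.norm_of_nonneg (pow_nonneg (ep_nonneg n) _)]
  exact pow_le_pow_of_le_one (ep_nonneg n) (ep_le_one n) h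

theorem bigO_inv {f : ℕ → ℝ} {r s : ℕ} (hf : f =O[atTop] (fun n => ep n ^ r)) (h : s ≤ r + 2) :
    (fun n : ℕ => (n : ℝ)⁻¹ * f n) =O[atTop] (fun n => ep n ^ s) := by
  have : (fun n : ℕ => (n : ℝ)⁻¹ * f n) =O[atTop] (fun n => ep n ^ 2 * ep n ^ r) := by
    simp only [← ep_sq]
    exact (Asymptotics.isBigO_refl _ _).mul hf
  refine this.trans ?_
  simp only [← pow_add]
  exact ep_mono (by omega)

theorem bigO_sum {ι : Type*} [Fintype ι] {f : ι → ℕ → ℝ} {g : ℕ → ℝ}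
    (h : ∀ i ∈ (Finset.univ : Finset ι), f i =O[atTop] g) :
    (fun n => ∑ i, f i n) =O[atTop] g := by
  have := Asymptotics.IsBigO.sum h
  refine this.congr_left fun n => ?_
  simp

theorem E_add_mul {n : ℕ} (M : GM n K ν μ) (x y : M.R) (c : ℝ) :
    M.E x + c * M.E y = M.E (x + algebraMap ℝ M.R c * y) := by
  rw [map_add, ← Algebra.smul_def, map_smul, smul_eq_mul]

theorem len_eraseIdx (L : List (List Bool)) (i : Fin L.length) :
    L[i].length + ((L.eraseIdx i).map List.length).sum = (L.map List.length).sum := by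
  induction L with
  | nil => exact i.elim0
  | cons a L ih =>
    refine Fin.cases ?_ (fun j => ?_) i
    · simp
    · have := ih j
      simp at this ⊢
      omega

theorem stage1 (N : ℕ) : ∀ L : List (List Bool), (L.map List.length).sum ≤ N →
    (fun n => (M n).E (L.map (M n).tc).prod) =O[atTop] (fun n => ep n ^ L.length) := by
  induction N using Nat.strong_induction_on with
  | _ N ih =>
  intro L hL
  match L with
  | [] =>
    simp only [List.map_nil, List.prod_nil, GM.E_one, List.length_nil, pow_zero]
    exact Asymptotics.isBigO_refl _ _
  | [] :: L =>
    refine (Asymptotics.isBigO_zero _ _).congr' ?_ EventuallyEq.rfl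
    filter_upwards [eventually_gt_atTop 0] with n hn
    have : (M n).tc [] = 0 := by
      have hn' : (n : ℝ) ≠ 0 := by positivity
      simp only [tc, t, wmat, wlim, map_one, Matrix.trace_one, Fintype.card_fin]
      rw [Algebra.smul_def, ← map_natCast (algebraMap ℝ (M n).R) n, ← map_mul,
        inv_mul_cancel₀ hn', map_one, sub_self]
    simp [this]
  | (b :: w) :: L =>
    simp only [List.map_cons, List.length_cons, List.sum_cons] at hL
    simp only [List.map_cons, List.prod_cons, List.length_cons]
    have key : ∀ L' : List (List Bool), (L'.map List.length).sum < N →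
      (fun n => (M n).E (L'.map (M n).tc).prod) =O[atTop] (fun n => ep n ^ L'.length) :=
      fun L' h => ih _ h L' le_rfl
    have tlen : ∀ p : Fin w.length, (w.take p).length + (w.drop (p+1)).length + 1 = w.length := by
      intro p; simp; omega
    have k0 := key L (by omega)
    have k1 : ∀ v : List Bool, v.length ≤ w.length → (fun n => (M n).E ((M n).tc v *
        (L.map (M n).tc).prod)) =O[atTop] (fun n => ep n ^ (L.length + 1)) := by
      intro v hv
      exact key (v :: L) (by simp; omega)
    simp only [E_tc_cons]
    refine Asymptotics.IsBigO.add ?_ ?_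
    · refine Asymptotics.IsBigO.const_mul_left ?_ _
      refine bigO_sum fun p _ => ?_
      have hp := tlen p
      by_cases hb : w[p] = b
      · simp only [hb, if_true]
        refine bigO_inv (r := L.length) ?_ (by omega)
        refine Asymptotics.IsBigO.add ?_ (k0.const_mul_left _)
        refine (k1 _ ?_).trans (ep_mono (by omega))
        rw [List.length_append, wtr_length]; omega
      · simp only [hb, if_false]
        refine Asymptotics.IsBigO.add (Asymptotics.IsBigO.add ?_ ?_) ?_
        · refine (key (w.take p :: w.drop (p+1) :: L) ?_).trans (ep_mono ?_)
          · simp only [List.map_cons, List.sum_cons]; omega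
          · simp
        · exact (k1 _ (by omega)).const_mul_left _
        · exact (k1 _ (by omega)).const_mul_left _
    · simp only [mul_assoc, pow_two]
      refine Asymptotics.IsBigO.const_mul_left ?_ _
      refine bigO_inv (r := L.length) ?_ (by omega)
      refine bigO_inv (r := L.length - 1) ?_ (by omega)
      simp only [sum_DL_prod, map_sum]
      refine bigO_sum fun i _ => bigO_sum fun q _ => ?_
      have hi := len_eraseIdx L i
      have hq : (L[i].take q).length + (L[i].drop (q+1)).length + 1 = L[i].length := by
        simp; omega
      have hl : (L.eraseIdx i).length = L.length - 1 := List.length_eraseIdx_of_lt i.2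
      have k2 : ∀ v : List Bool, v.length ≤ w.length + L[i].length →
        (fun n => (M n).E ((M n).t v * ((L.eraseIdx i).map (M n).tc).prod)) =O[atTop]
          (fun n => ep n ^ (L.length - 1)) := by
        intro v hv
        have h1 := key (v :: L.eraseIdx i) (by simp only [List.map_cons, List.sum_cons]; omega)
        have h2 := key (L.eraseIdx i) (by omega)
        have h3 := (h1.trans (ep_mono (r := L.length - 1) (by simp [hl]))).add
          ((h2.trans (ep_mono (r := L.length - 1) (by simp [hl]))).const_mul_left (wlim ν v))
        refine h3.congr_left fun n => ?_
        simp only [List.map_cons, List.prod_cons]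
        rw [E_add_mul, ← add_mul]
        simp [tc]
      by_cases hb : (L[i])[q] = b
      · simp only [hb, if_true]
        refine k2 _ ?_
        simp only [List.length_append, wtr_length]; omega
      · simp only [hb, if_false]
        refine k2 _ ?_
        simp only [List.length_append]; omega

theorem stage1' (U : List (List Bool)) : ∀ L : List (List Bool),
    (fun n => (M n).E ((L.map (M n).tc).prod * (U.map (M n).t).prod)) =O[atTop]
      (fun n => ep n ^ 0) := by
  induction U with
  | nil =>
    intro L
    simp only [List.map_nil, List.prod_nil, mul_one]
    exact (stage1 M _ L le_rfl).trans (ep_mono (by omega))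
  | cons u U ih =>
    intro L
    refine ((ih (u :: L)).add ((ih L).const_mul_left (wlim ν u))).congr_left fun n => ?_
    simp only [List.map_cons, List.prod_cons]
    rw [E_add_mul]
    congr 1
    simp only [tc]
    ring

end GM


namespace GM

section
variable {n : ℕ} {K : Type} [DecidableEq K] {ν μ : ℝ} (M : GM n K ν μ)

/-- normalized quadratic form of a word -/
noncomputable def s (k : K) (w : List Bool) (l : K) : M.R :=
  (n : ℝ)⁻¹ • ∑ a, ∑ b, M.Y a k * (wmat M.A w a b * M.Y b l)

/-- quadratic form minus conditional mean -/
noncomputable def sc (c : K × List Bool × K) : M.R :=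
  M.s c.1 c.2.1 c.2.2 - algebraMap ℝ M.R (if c.1 = c.2.2 then μ else 0) * M.t c.2.1

theorem DY_wmat (a : Fin n) (k : K) (w : List Bool) (x y : Fin n) :
    M.DY a k (wmat M.A w x y) = 0 := by
  induction w generalizing x y with
  | nil =>
    simp only [wmat]
    rw [Matrix.one_apply]
    split <;> simp
  | cons c w ih =>
    simp only [wmat, Matrix.mul_apply, map_sum, Derivation.leibniz, ih]
    cases c <;> simp [ltr, M.DY_A]

theorem DY_t (a : Fin n) (k : K) (w : List Bool) : M.DY a k (M.t w) = 0 := by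
  simp [t, Matrix.trace, DY_wmat]

theorem DY_tprod (a : Fin n) (k : K) (U : List (List Bool)) : M.DY a k (U.map M.t).prod = 0 := by
  simp [deriv_list_prod, DY_t]

theorem E_sc (c : K × List Bool × K) (P : M.R) :
    M.E (M.sc c * P) = μ * ((n : ℝ)⁻¹ *
      M.E (∑ a, ∑ b, wmat M.A c.2.1 a b * M.Y b c.2.2 * M.DY a c.1 P)) := by
  obtain ⟨k, w, l⟩ := c
  simp only [sc]
  rw [sub_mul, map_sub, mul_assoc, ← Algebra.smul_def, map_smul]
  have h1 : M.E (M.s k w l * P) = (n : ℝ)⁻¹ * ∑ a, ∑ b, μ *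
      (M.E (wmat M.A w a b * M.DY a k (M.Y b l) * P)
        + M.E (wmat M.A w a b * M.Y b l * M.DY a k P)) := by
    simp only [s, Algebra.smul_mul_assoc,
      Finset.sum_mul, map_sum, map_smul, smul_eq_mul, mul_assoc, E_Y]
    congr 1
    refine Finset.sum_congr rfl fun u _ => Finset.sum_congr rfl fun v _ => ?_
    rw [← map_add]
    congr 2
    simp only [Derivation.leibniz, DY_wmat, smul_eq_mul]
    ring
  rw [h1]
  simp only [← Finset.mul_sum, Finset.sum_add_distrib, ← map_sum, ← Finset.sum_mul]
  have h2 : ∑ a, ∑ b, wmat M.A w a b * M.DY a k (M.Y b l) =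
      (if k = l then 1 else 0) * Matrix.trace (wmat M.A w) := by
    simp only [DY_Y, Matrix.one_apply, Matrix.trace, Matrix.diag_apply]
    split <;> simp
  rw [h2]
  split
  · simp only [t, one_mul, smul_eq_mul, Algebra.smul_mul_assoc, map_smul]; ring
  · simp only [zero_mul, map_zero, smul_eq_mul]; ring

theorem sum_DY_sc (k : K) (w : List Bool) (l : K) (c : K × List Bool × K) :
    ∑ a, ∑ b, wmat M.A w a b * M.Y b l * M.DY a k (M.sc c) =
      (if k = c.1 then 1 else 0) * M.s l (wtr w ++ c.2.1) c.2.2 +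
      (if k = c.2.2 then 1 else 0) * M.s c.1 (c.2.1 ++ w) l := by
  obtain ⟨k', v, l'⟩ := c
  have h1 : ∀ a, M.DY a k (M.sc (k', v, l')) = (n : ℝ)⁻¹ •
      ((if k = k' then 1 else 0) * (∑ y, wmat M.A v a y * M.Y y l')
        + (if k = l' then 1 else 0) * (∑ x, M.Y x k' * wmat M.A v x a)) := by
    intro a
    simp only [sc, s, map_sub, Derivation.leibniz, DY_t, Derivation.map_algebraMap,
      add_zero, sub_zero, Derivation.map_smul, map_sum, smul_eq_mul, DY_wmat, DY_Y, mul_zero,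
      Finset.sum_add_distrib, Matrix.one_apply]
    rw [add_comm]
    congr 2
    · by_cases h : k = k'
      · simp [h]
      · simp [h]
    · by_cases h : k = l'
      · simp [h]
      · simp [h]
  simp only [h1, Algebra.mul_smul_comm, ← Finset.smul_sum, s, mul_add, Finset.sum_add_distrib,
    smul_add]
  congr 2
  · simp only [wmat_append, wmat_wtr, Matrix.mul_apply, Matrix.transpose_apply, Finset.mul_sum,
      Finset.sum_mul]
    have : ∀ f : Fin n → Fin n → Fin n → M.R,
        ∑ x, ∑ y, ∑ z, f x y z = ∑ y, ∑ z, ∑ x, f x y z := by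
      intro f
      rw [Finset.sum_comm]
      exact Finset.sum_congr rfl fun _ _ => Finset.sum_comm
    rw [this]
    refine Finset.sum_congr rfl fun _ _ => Finset.sum_congr rfl fun _ _ =>
      Finset.sum_congr rfl fun _ _ => ?_
    ring
  · simp only [wmat_append, Matrix.mul_apply, Finset.mul_sum, Finset.sum_mul]
    have : ∀ f : Fin n → Fin n → Fin n → M.R,
        ∑ x, ∑ y, ∑ z, f x y z = ∑ z, ∑ y, ∑ x, f x y z := by
      intro f
      rw [Finset.sum_comm]
      rw [Finset.sum_congr rfl fun _ _ => Finset.sum_comm]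
      rw [Finset.sum_comm]
    rw [this]
    refine Finset.sum_congr rfl fun _ _ => Finset.sum_congr rfl fun _ _ =>
      Finset.sum_congr rfl fun _ _ => ?_
    ring

theorem sum_DY_prod (k : K) (w : List Bool) (l : K) (L : List (K × List Bool × K))
    (U : List (List Bool)) :
    ∑ a, ∑ b, wmat M.A w a b * M.Y b l * M.DY a k ((L.map M.sc).prod * (U.map M.t).prod) =
    ∑ i : Fin L.length,
      ((if k = L[i].1 then 1 else 0) * M.s l (wtr w ++ L[i].2.1) L[i].2.2 +
      (if k = L[i].2.2 then 1 else 0) * M.s L[i].1 (L[i].2.1 ++ w) l) *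
        (((L.eraseIdx i).map M.sc).prod * (U.map M.t).prod) := by
  simp only [Derivation.leibniz _ (List.map M.sc L).prod, DY_tprod]
  simp only [smul_eq_mul, mul_zero, zero_add, deriv_list_prod, Finset.mul_sum]
  simp only [Finset.sum_comm (t := (Finset.univ : Finset (Fin L.length)))]
  refine Finset.sum_congr rfl fun i _ => ?_
  rw [← sum_DY_sc]
  simp only [Finset.sum_mul]
  refine Finset.sum_congr rfl fun _ _ => Finset.sum_congr rfl fun _ _ => ?_
  ring

end

variable {K : Type} [DecidableEq K] {ν μ : ℝ} (M : (n : ℕ) → GM n K ν μ)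

theorem stage2 (N : ℕ) : ∀ (L : List (K × List Bool × K)) (U : List (List Bool)), L.length ≤ N →
    (fun n => (M n).E ((L.map (M n).sc).prod * (U.map (M n).t).prod)) =O[atTop]
      (fun n => ep n ^ L.length) := by
  induction N using Nat.strong_induction_on with
  | _ N ih =>
  intro L U hL
  match L with
  | [] => simpa using stage1' M U []
  | (k, w, l) :: L =>
    simp only [List.length_cons] at hL
    simp only [List.map_cons, List.prod_cons, List.length_cons, mul_assoc]
    simp only [E_sc]
    refine Asymptotics.IsBigO.const_mul_left ?_ _
    refine bigO_inv (r := L.length - 1) ?_ (by omega)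
    simp only [sum_DY_prod, map_sum]
    refine bigO_sum fun i _ => ?_
    have hl : (L.eraseIdx i).length = L.length - 1 := List.length_eraseIdx_of_lt i.2
    have hi := i.2
    have k2 : ∀ (k : K) (v : List Bool) (l : K),
        (fun n => (M n).E ((M n).s k v l * (((L.eraseIdx i).map (M n).sc).prod *
          (U.map (M n).t).prod))) =O[atTop] (fun n => ep n ^ (L.length - 1)) := by
      intro k v l
      have h1 := ih (L.length) (by omega) ((k, v, l) :: L.eraseIdx i) U (by simp [hl]; omega)
      have h2 := ih (L.length - 1) (by omega) (L.eraseIdx i) (v :: U) (by omega)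
      have h3 := (h1.trans (ep_mono (r := L.length - 1) (by simp [hl]))).add
          ((h2.trans (ep_mono (r := L.length - 1) (by simp [hl]))).const_mul_left
            (if k = l then μ else 0))
      refine h3.congr_left fun n => ?_
      simp only [List.map_cons, List.prod_cons]
      rw [E_add_mul]
      congr 1
      simp only [sc]
      ring
    simp only [add_mul, map_add, mul_assoc]
    refine Asymptotics.IsBigO.add ?_ ?_
    · split
      · simpa only [one_mul] using k2 _ _ _
      · simpa only [zero_mul, map_zero] using Asymptotics.isBigO_zero _ _
    · split
      · simpa only [one_mul] using k2 _ _ _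
      · simpa only [zero_mul, map_zero] using Asymptotics.isBigO_zero _ _

theorem moment_t (w : List Bool) :
    (fun n => (M n).E ((M n).tc w ^ 4)) =O[atTop] (fun n => ep n ^ 4) := by
  simpa only [List.map_replicate, List.prod_replicate, List.length_replicate] using
    stage1 M _ (List.replicate 4 w) le_rfl

theorem moment_s (c : K × List Bool × K) :
    (fun n => (M n).E ((M n).sc c ^ 4)) =O[atTop] (fun n => ep n ^ 4) := by
  simpa only [List.map_replicate, List.prod_replicate, List.length_replicate, List.map_nil,
    List.prod_nil, mul_one] using stage2 M _ (List.replicate 4 c) [] le_rfl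

end GM


theorem integrable_pow_gaussian (v : NNReal) (k : ℕ) :
    Integrable (fun x : ℝ => x ^ k) (gaussianReal 0 v) := by
  have h := (memLp_id_gaussianReal' (μ := 0) (v := v) (k : ENNReal) (by simp)).integrable_norm_pow'
  rw [← integrable_norm_iff (by fun_prop)]
  simpa using h

theorem gaussian_moment_succ (v : NNReal) (hv : v ≠ 0) (k : ℕ) :
    ∫ x, x ^ (k + 1) ∂(gaussianReal 0 v) = v * (k * ∫ x, x ^ (k - 1) ∂(gaussianReal 0 v)) := by
  have hv' : (v : ℝ) ≠ 0 := by exact_mod_cast hv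
  have hpowInt : ∀ k : ℕ, Integrable (fun x : ℝ => x ^ k * gaussianPDFReal 0 v x) := by
    intro k
    have := integrable_pow_gaussian v k
    rw [gaussianReal_of_var_ne_zero _ hv, integrable_withDensity_iff_integrable_smul₀'
      (measurable_gaussianPDF _ _).aemeasurable (by simp [gaussianPDF])] at this
    simpa [toReal_gaussianPDF, mul_comm] using this
  have hd : ∀ x, HasDerivAt (gaussianPDFReal 0 v) (-(x / v) * gaussianPDFReal 0 v x) x := by
    intro x
    simp only [gaussianPDFReal_def]
    have : HasDerivAt (fun x : ℝ => -(x - 0) ^ 2 / (2 * (v : ℝ))) (-(x / v)) x := by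
      have := ((((hasDerivAt_id x).sub_const 0).pow 2).neg).div_const (2 * (v : ℝ))
      refine HasDerivAt.congr_deriv this ?_
      simp only [id, Nat.cast_ofNat, sub_zero]
      field_simp
      try ring
    have := (this.exp).const_mul (Real.sqrt (2 * Real.pi * v))⁻¹
    refine HasDerivAt.congr_deriv this ?_
    ring
  have h := integral_mul_deriv_eq_deriv_mul_of_integrable (u := fun x : ℝ => x ^ k)
    (v := gaussianPDFReal 0 v) (u' := fun x => k * x ^ (k - 1))
    (v' := fun x => -(x / v) * gaussianPDFReal 0 v x)
    (fun x _ => hasDerivAt_pow k x) (fun x _ => hd x) ?_ ?_ (hpowInt k)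
  · rw [integral_gaussianReal_eq_integral_smul hv, integral_gaussianReal_eq_integral_smul hv]
    simp only [smul_eq_mul]
    have e1 : ∫ x : ℝ, x ^ k * (-(x / v) * gaussianPDFReal 0 v x) =
        -(v : ℝ)⁻¹ * ∫ x, gaussianPDFReal 0 v x * x ^ (k + 1) := by
      rw [← integral_const_mul]
      congr 1; ext x; rw [pow_succ]; field_simp
    have e2 : ∫ x : ℝ, k * x ^ (k - 1) * gaussianPDFReal 0 v x =
        k * ∫ x, gaussianPDFReal 0 v x * x ^ (k - 1) := by
      rw [← integral_const_mul]
      congr 1; ext x; ring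
    rw [e1, e2] at h
    field_simp at h
    linarith
  · have := (hpowInt (k + 1)).const_mul (-(v : ℝ)⁻¹)
    refine this.congr (Eventually.of_forall fun x => ?_)
    simp only [Pi.mul_apply]; rw [pow_succ]; field_simp
  · have := (hpowInt (k - 1)).const_mul (k : ℝ)
    refine this.congr (Eventually.of_forall fun x => ?_)
    simp only [Pi.mul_apply]; ring

set_option linter.unusedSectionVars false

section poly
variable {Ω : Type*} [MeasureSpace Ω] {ι : Type} [Fintype ι] [DecidableEq ι]

/-- Gaussian moment hypothesis for a finite family. -/
def GaussMom (z : ι → Ω → ℝ) (v : ι → NNReal) : Prop :=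
  ∀ m : ι → ℕ, Integrable (fun ω => ∏ i, z i ω ^ m i) (ℙ : Measure Ω) ∧
    ∫ ω, ∏ i, z i ω ^ m i ∂(ℙ : Measure Ω) = ∏ i, ∫ x, x ^ m i ∂(gaussianReal 0 (v i))

variable {z : ι → Ω → ℝ} {v : ι → NNReal}

theorem eval_monomial' (z : ι → Ω → ℝ) (m : ι →₀ ℕ) (a : ℝ) (ω : Ω) :
    MvPolynomial.eval (fun i => z i ω) (MvPolynomial.monomial m a) = a * ∏ i, z i ω ^ m i := by
  rw [MvPolynomial.eval_monomial, Finsupp.prod_fintype]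
  simp

theorem GaussMom.integrable (h : GaussMom z v) (p : MvPolynomial ι ℝ) :
    Integrable (fun ω => MvPolynomial.eval (fun i => z i ω) p) (ℙ : Measure Ω) := by
  induction p using MvPolynomial.induction_on' with
  | monomial m a =>
    simp only [eval_monomial']
    exact (h m).1.const_mul a
  | add p q hp hq =>
    simp only [map_add]
    exact hp.add hq

noncomputable def GaussMom.E (h : GaussMom z v) : MvPolynomial ι ℝ →ₗ[ℝ] ℝ where
  toFun p := ∫ ω, MvPolynomial.eval (fun i => z i ω) p ∂(ℙ : Measure Ω)
  map_add' p q := by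
    simp only [map_add]
    exact integral_add (h.integrable p) (h.integrable q)
  map_smul' c p := by
    simp only [MvPolynomial.smul_eval, RingHom.id_apply, smul_eq_mul]
    exact integral_const_mul _ _

theorem GaussMom.E_apply (h : GaussMom z v) (p : MvPolynomial ι ℝ) :
    h.E p = ∫ ω, MvPolynomial.eval (fun i => z i ω) p ∂(ℙ : Measure Ω) := rfl

theorem GaussMom.E_monomial (h : GaussMom z v) (m : ι →₀ ℕ) (a : ℝ) :
    h.E (MvPolynomial.monomial m a) = a * ∏ i, ∫ x, x ^ m i ∂(gaussianReal 0 (v i)) := by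
  rw [h.E_apply]
  simp only [eval_monomial']
  rw [integral_const_mul, (h m).2]

theorem GaussMom.ibp (h : GaussMom z v) (hv : ∀ i, v i ≠ 0) (i : ι) (p : MvPolynomial ι ℝ) :
    h.E (MvPolynomial.X i * p) = v i * h.E (MvPolynomial.pderiv i p) := by
  induction p using MvPolynomial.induction_on' with
  | monomial m a =>
    rw [MvPolynomial.pderiv_monomial, MvPolynomial.X, MvPolynomial.monomial_mul, h.E_monomial,
      h.E_monomial, ← Finset.mul_prod_erase _ _ (Finset.mem_univ i),
      ← Finset.mul_prod_erase Finset.univ (fun j => ∫ x, x ^ (m - Finsupp.single i 1 : ι →₀ ℕ) j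
        ∂(gaussianReal 0 (v j))) (Finset.mem_univ i)]
    have e : ∀ j ∈ Finset.univ.erase i, (∫ x, x ^ (Finsupp.single i 1 + m : ι →₀ ℕ) j
        ∂(gaussianReal 0 (v j))) = ∫ x, x ^ (m - Finsupp.single i 1 : ι →₀ ℕ) j
        ∂(gaussianReal 0 (v j)) := by
      intro j hj
      have hj' : i ≠ j := (Finset.ne_of_mem_erase hj).symm
      simp [hj']
    rw [Finset.prod_congr rfl e]
    have e1 : (Finsupp.single i 1 + m : ι →₀ ℕ) i = m i + 1 := by simp [add_comm]
    have e2 : (m - Finsupp.single i 1 : ι →₀ ℕ) i = m i - 1 := by simp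
    rw [e1, e2, gaussian_moment_succ _ (hv i)]
    ring
  | add p q hp hq =>
    rw [mul_add, map_add, map_add, map_add, hp, hq]; ring

end poly


theorem wmat_map {n : ℕ} {R S : Type*} [CommRing R] [CommRing S] (f : R →+* S)
    (A : Matrix (Fin n) (Fin n) R) (w : List Bool) :
    (wmat A w).map f = wmat (A.map f) w := by
  induction w with
  | nil => simp [wmat]
  | cons b w ih =>
    simp only [wmat, Matrix.map_mul, ih]
    cases b <;> simp [ltr, Matrix.transpose_map]

section ev
variable {n : ℕ} {K : Type} [DecidableEq K] {ν μ : ℝ} (M : GM n K ν μ)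

theorem GM.map_s (φ : M.R →ₐ[ℝ] ℝ) (k : K) (w : List Bool) (l : K) :
    φ (M.s k w l) = (n : ℝ)⁻¹ * ∑ a, ∑ b, φ (M.Y a k) *
      (wmat (M.A.map φ) w a b * φ (M.Y b l)) := by
  have : wmat (M.A.map φ) w = (wmat M.A w).map φ := (wmat_map φ.toRingHom M.A w).symm
  simp only [GM.s, map_smul, map_sum, map_mul, smul_eq_mul, this, Matrix.map_apply]

theorem GM.map_sc (φ : M.R →ₐ[ℝ] ℝ) (k : K) (w : List Bool) (l : K) :
    φ (M.sc (k, w, l)) = φ (M.s k w l) - (if k = l then μ else 0) * φ (M.t w) := by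
  simp [GM.sc]

theorem GM.map_tc (φ : M.R →ₐ[ℝ] ℝ) (w : List Bool) :
    φ (M.tc w) = φ (M.t w) - wlim ν w := by
  simp [GM.tc]

end ev

section poly
variable {Ω : Type*} [MeasureSpace Ω] {ι : Type} [Fintype ι] [DecidableEq ι]
variable {z : ι → Ω → ℝ} {v : ι → NNReal}

theorem sqrt_mul_ep {n : ℕ} (u : Fin n) : Real.sqrt n * GM.ep n = 1 := by
  have : 0 < n := u.pos
  have : (0 : ℝ) < n := by exact_mod_cast this
  rw [GM.ep, mul_inv_cancel₀]
  positivity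

noncomputable def GaussMom.mkGM [IsProbabilityMeasure (ℙ : Measure Ω)]
    (h : GaussMom z v) (hv : ∀ i, v i ≠ 0) (n : ℕ) (K : Type)
    [DecidableEq K] (ν μ : NNReal) (iW : Fin n → Fin n → ι) (iY : Fin n → K → ι)
    (hWW : ∀ a b c d, iW a b = iW c d ↔ a = c ∧ b = d)
    (hYY : ∀ a b c d, iY a b = iY c d ↔ a = c ∧ b = d)
    (hWY : ∀ a b c d, iW a b ≠ iY c d)
    (hvW : ∀ a b, v (iW a b) = ν) (hvY : ∀ a b, v (iY a b) = μ) : GM n K ν μ where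
  R := MvPolynomial ι ℝ
  A := Matrix.of fun a b => GM.ep n • MvPolynomial.X (iW a b)
  Y := fun a k => MvPolynomial.X (iY a k)
  DA u v := Real.sqrt n • MvPolynomial.pderiv (iW u v)
  DY a k := MvPolynomial.pderiv (iY a k)
  E := h.E
  DA_A u v x y := by
    simp only [Matrix.of_apply, Derivation.smul_apply, Derivation.map_smul, MvPolynomial.pderiv_X,
      smul_smul, Pi.single_apply, hWW, Matrix.one_apply, mul_comm (GM.ep n), sqrt_mul_ep u]
    by_cases h1 : x = u <;> by_cases h2 : y = v <;> simp [h1, h2, Ne.symm]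
  DY_A a k x y := by
    simp [MvPolynomial.pderiv_X, Pi.single_apply, hWY]
  DY_Y a k b l := by
    simp only [MvPolynomial.pderiv_X, Pi.single_apply, hYY, Matrix.one_apply]
    by_cases h1 : k = l <;> by_cases h2 : a = b <;> simp [h1, h2, eq_comm]
  E_one := by
    rw [h.E_apply]; simp
  E_A u w P := by
    rw [Matrix.of_apply, Algebra.smul_mul_assoc, map_smul, h.ibp hv, hvW, Derivation.smul_apply,
      map_smul, smul_eq_mul, smul_eq_mul]
    have h1 := sqrt_mul_ep u
    have h2 := GM.ep_sq n
    rw [div_eq_mul_inv, ← h2]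
    linear_combination (-(ν : ℝ) * GM.ep n * h.E ((MvPolynomial.pderiv (iW u w)) P)) * h1
  E_Y a k P := by
    rw [h.ibp hv, hvY]

end poly

theorem ae_tendsto_zero_of_summable {Ω : Type*} [MeasureSpace Ω] (f : ℕ → Ω → ℝ)
    (hf : ∀ n, Integrable (fun ω => f n ω ^ 4) (ℙ : Measure Ω))
    (h : (fun n => ∫ ω, f n ω ^ 4 ∂(ℙ : Measure Ω)) =O[atTop] (fun n => GM.ep n ^ 4)) :
    ∀ᵐ ω ∂(ℙ : Measure Ω), Tendsto (fun n => f n ω) atTop (nhds 0) := by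
  have hs : Summable (fun n => ∫ ω, f n ω ^ 4 ∂(ℙ : Measure Ω)) := by
    refine summable_of_isBigO_nat (g := fun n : ℕ => ((n : ℝ) ^ 2)⁻¹) ?_ ?_
    · exact Real.summable_nat_pow_inv.2 (by norm_num)
    · refine h.congr_right fun n => ?_
      rw [show 4 = 2 * 2 by norm_num, pow_mul, GM.ep_sq, inv_pow]
  have hnn : ∀ n ω, 0 ≤ f n ω ^ 4 := fun n ω => by positivity
  have h1 : ∫⁻ ω, ∑' n, ENNReal.ofReal (f n ω ^ 4) ∂(ℙ : Measure Ω) ≠ ⊤ := by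
    rw [lintegral_tsum (fun n => (hf n).1.aemeasurable.ennreal_ofReal)]
    have : ∀ n, ∫⁻ ω, ENNReal.ofReal (f n ω ^ 4) ∂(ℙ : Measure Ω)
        = ENNReal.ofReal (∫ ω, f n ω ^ 4 ∂(ℙ : Measure Ω)) := fun n =>
      (ofReal_integral_eq_lintegral_ofReal (hf n) (Eventually.of_forall (hnn n))).symm
    simp only [this]
    exact hs.tsum_ofReal_ne_top
  have h2 := ae_lt_top' (AEMeasurable.tsum
    (fun n => (hf n).1.aemeasurable.ennreal_ofReal)) h1
  filter_upwards [h2] with ω hω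
  have h3 := ENNReal.tendsto_atTop_zero_of_tsum_ne_top hω.ne
  have h4 := (ENNReal.tendsto_toReal (a := 0) (by simp)).comp h3
  have h5 : Tendsto (fun n => f n ω ^ 4) atTop (nhds 0) := by
    refine h4.congr fun n => ?_
    simp [ENNReal.toReal_ofReal (hnn n ω)]
  have h6 := (Real.continuous_sqrt.comp Real.continuous_sqrt).continuousAt.tendsto.comp h5
  simp only [Function.comp_def, Real.sqrt_zero] at h6
  rw [tendsto_zero_iff_abs_tendsto_zero]
  refine h6.congr fun n => ?_
  rw [show f n ω ^ 4 = (f n ω ^ 2) ^ 2 by ring, Real.sqrt_sq (by positivity), Real.sqrt_sq_eq_abs]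
  rfl

theorem as_forms {Ω : Type*} [MeasureSpace Ω] [IsProbabilityMeasure (ℙ : Measure Ω)]
    (ι : ℕ → Type) [∀ n, Fintype (ι n)] [∀ n, DecidableEq (ι n)]
    (z : (n : ℕ) → ι n → Ω → ℝ) (v : (n : ℕ) → ι n → NNReal)
    (h : ∀ n, GaussMom (z n) (v n)) (hv : ∀ n i, v n i ≠ 0) (K : Type)
    [DecidableEq K] (ν μ : NNReal) (iW : (n : ℕ) → Fin n → Fin n → ι n)
    (iY : (n : ℕ) → Fin n → K → ι n)
    (hWW : ∀ n a b c d, iW n a b = iW n c d ↔ a = c ∧ b = d)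
    (hYY : ∀ n a b c d, iY n a b = iY n c d ↔ a = c ∧ b = d)
    (hWY : ∀ n a b c d, iW n a b ≠ iY n c d)
    (hvW : ∀ n a b, v n (iW n a b) = ν) (hvY : ∀ n a b, v n (iY n a b) = μ)
    (k : K) (w : List Bool) (l : K) :
    ∀ᵐ ω ∂(ℙ : Measure Ω), Tendsto (fun n : ℕ => (n : ℝ)⁻¹ * ∑ a, ∑ b, z n (iY n a k) ω *
      (wmat (Matrix.of fun a b => GM.ep n * z n (iW n a b) ω) w a b * z n (iY n b l) ω)) atTop
      (nhds ((if k = l then (μ : ℝ) else 0) * wlim ν w)) := by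
  let M : (n : ℕ) → GM n K ν μ := fun n =>
    (h n).mkGM (hv n) n K ν μ (iW n) (iY n) (hWW n) (hYY n) (hWY n) (hvW n) (hvY n)
  let φ : (n : ℕ) → (ω : Ω) → (M n).R →ₐ[ℝ] ℝ :=
    fun n ω => (MvPolynomial.aeval (fun i => z n i ω) : MvPolynomial (ι n) ℝ →ₐ[ℝ] ℝ)
  have key : ∀ p : (n : ℕ) → (M n).R,
      ((fun n => (M n).E (p n ^ 4)) =O[atTop] (fun n => GM.ep n ^ 4)) →
      ∀ᵐ ω ∂(ℙ : Measure Ω), Tendsto (fun n => φ n ω (p n)) atTop (nhds 0) := by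
    intro p hp
    have hE : ∀ n, (M n).E (p n ^ 4) = ∫ ω, φ n ω (p n ^ 4) ∂(ℙ : Measure Ω) := fun n => rfl
    refine ae_tendsto_zero_of_summable _ (fun n => ?_) ?_
    · have : Integrable (fun ω => φ n ω (p n ^ 4)) (ℙ : Measure Ω) := (h n).integrable (p n ^ 4)
      simpa only [map_pow] using this
    · simpa only [hE, map_pow] using hp
  have h1 := key (fun n => (M n).sc (k, w, l)) (GM.moment_s M (k, w, l))
  have h2 := key (fun n => (M n).tc w) (GM.moment_t M w)
  filter_upwards [h1, h2] with ω h1 h2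
  have h3 := (h1.add (h2.const_mul (if k = l then (μ : ℝ) else 0))).add_const
    ((if k = l then (μ : ℝ) else 0) * wlim ν w)
  simp only [mul_zero, add_zero, zero_add] at h3
  refine h3.congr fun n => ?_
  have hA : ((M n).A).map (φ n ω) = Matrix.of fun a b => GM.ep n * z n (iW n a b) ω := by
    ext a b
    show MvPolynomial.aeval (fun i => z n i ω)
      (GM.ep n • (MvPolynomial.X (iW n a b) : MvPolynomial (ι n) ℝ)) = _
    simp
  have hY : ∀ a k, φ n ω ((M n).Y a k) = z n (iY n a k) ω := by
    intro a k
    show MvPolynomial.aeval (fun i => z n i ω)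
      (MvPolynomial.X (iY n a k) : MvPolynomial (ι n) ℝ) = _
    simp
  have e1 := GM.map_s (M n) (φ n ω) k w l
  rw [hA] at e1
  simp only [hY] at e1
  rw [GM.map_sc, GM.map_tc, ← e1]
  ring


theorem pi_pi_pow {α β : Type} [Fintype α] [Fintype β] (v : NNReal) (m : α → β → ℕ) :
    Integrable (fun A : α → β → ℝ => ∏ a, ∏ b, A a b ^ m a b)
      (Measure.pi fun _ : α => Measure.pi fun _ : β => gaussianReal 0 v) ∧
    ∫ A : α → β → ℝ, ∏ a, ∏ b, A a b ^ m a b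
      ∂(Measure.pi fun _ : α => Measure.pi fun _ : β => gaussianReal 0 v) =
      ∏ a, ∏ b, ∫ x, x ^ m a b ∂gaussianReal 0 v := by
  constructor
  · exact Integrable.fintype_prod (f := fun a (r : β → ℝ) => ∏ b, r b ^ m a b)
      (μ := fun _ : α => Measure.pi fun _ : β => gaussianReal 0 v)
      fun a => Integrable.fintype_prod (f := fun b (y : ℝ) => y ^ m a b)
        (μ := fun _ : β => gaussianReal 0 v) fun b => integrable_pow_gaussian v (m a b)
  · rw [integral_fintype_prod_eq_prod (fun a (r : β → ℝ) => ∏ b, r b ^ m a b)]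
    refine Finset.prod_congr rfl fun a _ => ?_
    rw [integral_fintype_prod_eq_prod (fun b (y : ℝ) => y ^ m a b)]

/-- Index type of all the parameters. -/
abbrev PIdx (n nx ny : ℕ) : Type := (Fin n × Fin n) ⊕ ((Fin n × Fin nx) ⊕ (Fin ny × Fin n))

def pval {n nx ny : ℕ} (W : Fin n → Fin n → ℝ) (F : Fin n → Fin nx → ℝ) (C : Fin ny → Fin n → ℝ) :
    PIdx n nx ny → ℝ :=
  Sum.elim (fun p => W p.1 p.2) (Sum.elim (fun p => F p.1 p.2) (fun p => C p.1 p.2))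

def pvar (n nx ny : ℕ) (νW νF νC : NNReal) : PIdx n nx ny → NNReal :=
  Sum.elim (fun _ => νW) (Sum.elim (fun _ => νF) (fun _ => νC))

theorem gaussMom_params {Ω : Type*} [MeasureSpace Ω] (n nx ny : ℕ) (νW νF νC : NNReal)
    (W : Ω → (Fin n → Fin n → ℝ)) (F : Ω → (Fin n → Fin nx → ℝ)) (C : Ω → (Fin ny → Fin n → ℝ))
    (hWmeas : Measurable W) (hFmeas : Measurable F) (hCmeas : Measurable C)
    (hjoint : Measure.map (fun ω => (W ω, F ω, C ω)) (ℙ : Measure Ω) =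
      (Measure.pi fun _ : Fin n => Measure.pi fun _ : Fin n => gaussianReal 0 νW).prod
        ((Measure.pi fun _ : Fin n => Measure.pi fun _ : Fin nx =>
            gaussianReal 0 νF).prod
          (Measure.pi fun _ : Fin ny => Measure.pi fun _ : Fin n =>
            gaussianReal 0 νC))) :
    GaussMom (fun i ω => pval (W ω) (F ω) (C ω) i) (pvar n nx ny νW νF νC) := by
  intro m
  let f : (Fin n → Fin n → ℝ) × (Fin n → Fin nx → ℝ) × (Fin ny → Fin n → ℝ) → ℝ := fun θ =>
    (∏ a, ∏ b, θ.1 a b ^ m (.inl (a, b))) * ((∏ a, ∏ b, θ.2.1 a b ^ m (.inr (.inl (a, b)))) *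
      ∏ a, ∏ b, θ.2.2 a b ^ m (.inr (.inr (a, b))))
  have hf : Measurable f := by fun_prop
  have hΦ : Measurable (fun ω => (W ω, F ω, C ω)) := hWmeas.prodMk (hFmeas.prodMk hCmeas)
  have e : (fun ω => ∏ i, pval (W ω) (F ω) (C ω) i ^ m i) = f ∘ (fun ω => (W ω, F ω, C ω)) := by
    funext ω
    simp [f, pval, Fintype.prod_sum_type, Fintype.prod_prod_type]
  have h1 := pi_pi_pow νW (fun a b : Fin n => m (.inl (a, b)))
  have h2 := pi_pi_pow νF (fun (a : Fin n) (b : Fin nx) => m (.inr (.inl (a, b))))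
  have h3 := pi_pi_pow νC (fun (a : Fin ny) (b : Fin n) => m (.inr (.inr (a, b))))
  constructor
  · rw [e, ← integrable_map_measure hf.aestronglyMeasurable hΦ.aemeasurable, hjoint]
    exact h1.1.mul_prod (h2.1.mul_prod h3.1)
  · have e2 := integral_map (μ := (ℙ : Measure Ω)) hΦ.aemeasurable
      (f := f) hf.aestronglyMeasurable
    rw [e]
    refine e2.symm.trans ?_
    rw [hjoint]
    have e3 := integral_prod_mul
      (μ := Measure.pi fun _ : Fin n => Measure.pi fun _ : Fin n => gaussianReal 0 νW)
      (ν := (Measure.pi fun _ : Fin n => Measure.pi fun _ : Fin nx =>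
            gaussianReal 0 νF).prod
          (Measure.pi fun _ : Fin ny => Measure.pi fun _ : Fin n =>
            gaussianReal 0 νC))
      (fun A : Fin n → Fin n → ℝ => ∏ a, ∏ b, A a b ^ m (.inl (a, b)))
      (fun θ : (Fin n → Fin nx → ℝ) × (Fin ny → Fin n → ℝ) =>
        (∏ a, ∏ b, θ.1 a b ^ m (.inr (.inl (a, b)))) *
          ∏ a, ∏ b, θ.2 a b ^ m (.inr (.inr (a, b))))
    have e4 := integral_prod_mul
      (μ := Measure.pi fun _ : Fin n => Measure.pi fun _ : Fin nx => gaussianReal 0 νF)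
      (ν := Measure.pi fun _ : Fin ny => Measure.pi fun _ : Fin n => gaussianReal 0 νC)
      (fun A : Fin n → Fin nx → ℝ => ∏ a, ∏ b, A a b ^ m (.inr (.inl (a, b))))
      (fun A : Fin ny → Fin n → ℝ => ∏ a, ∏ b, A a b ^ m (.inr (.inr (a, b))))
    rw [h2.2, h3.2] at e4
    rw [h1.2, e4] at e3
    refine e3.trans ?_
    simp [pvar, Fintype.prod_sum_type, Fintype.prod_prod_type]

theorem wmat_replicate_true {n : ℕ} (A : Matrix (Fin n) (Fin n) ℝ) (j : ℕ) :
    wmat A (List.replicate j true) = A ^ j := by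
  induction j with
  | zero => simp [wmat]
  | succ j ih => simp [List.replicate_succ, wmat, ih, ltr, pow_succ']

theorem wmat_replicate_false {n : ℕ} (A : Matrix (Fin n) (Fin n) ℝ) (j : ℕ) :
    wmat A (List.replicate j false) = (A ^ j)ᵀ := by
  rw [← wmat_replicate_true, ← wmat_wtr]
  simp [wtr]

theorem form_eq {n : ℕ} {K : Type} (P : Matrix (Fin n) (Fin n) ℝ) (Y : Matrix (Fin n) K ℝ)
    (k l : K) : ∑ a, ∑ b, Y a k * (P a b * Y b l) = (Yᵀ * (P * Y)) k l := by
  simp [Matrix.mul_apply, Finset.mul_sum]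

/-- Almost sure limits of all the bilinear forms that occur in the tangent kernel. -/
theorem as_all (nx ny : ℕ) (νW νF νC : NNReal)
    (hνW : 0 < (νW : ℝ)) (hνF : 0 < (νF : ℝ)) (hνC : 0 < (νC : ℝ))
    (Ω : Type*) [MeasureSpace Ω] [IsProbabilityMeasure (ℙ : Measure Ω)]
    (W : (n : ℕ) → Ω → (Fin n → Fin n → ℝ))
    (F : (n : ℕ) → Ω → (Fin n → Fin nx → ℝ))
    (C : (n : ℕ) → Ω → (Fin ny → Fin n → ℝ))
    (hWmeas : ∀ n, Measurable (W n)) (hFmeas : ∀ n, Measurable (F n))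
    (hCmeas : ∀ n, Measurable (C n))
    (hjoint : ∀ n, Measure.map (fun ω => (W n ω, F n ω, C n ω)) ℙ =
      (Measure.pi fun _ : Fin n => Measure.pi fun _ : Fin n => gaussianReal 0 νW).prod
        ((Measure.pi fun _ : Fin n => Measure.pi fun _ : Fin nx =>
            gaussianReal 0 νF).prod
          (Measure.pi fun _ : Fin ny => Measure.pi fun _ : Fin n =>
            gaussianReal 0 νC))) :
    ∀ᵐ ω ∂(ℙ : Measure Ω),
      (∀ (k l : Fin nx) (j j' : ℕ), Tendsto (fun n : ℕ => (n : ℝ)⁻¹ *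
        ∑ i, ((Matrix.of fun a b => GM.ep n * W n ω a b) ^ j * Matrix.of (F n ω)) i k *
          ((Matrix.of fun a b => GM.ep n * W n ω a b) ^ j' * Matrix.of (F n ω)) i l) atTop
        (nhds ((if k = l then (νF : ℝ) else 0) * (if j = j' then (νW : ℝ) ^ j else 0)))) ∧
      (∀ (k l : Fin ny) (j j' : ℕ), Tendsto (fun n : ℕ => (n : ℝ)⁻¹ *
        ∑ i, (Matrix.of (C n ω) * (Matrix.of fun a b => GM.ep n * W n ω a b) ^ j) k i *
          (Matrix.of (C n ω) * (Matrix.of fun a b => GM.ep n * W n ω a b) ^ j') l i) atTop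
        (nhds ((if k = l then (νC : ℝ) else 0) * (if j = j' then (νW : ℝ) ^ j else 0)))) := by
  have hG := fun n => gaussMom_params n nx ny νW νF νC (W n) (F n) (C n) (hWmeas n) (hFmeas n)
    (hCmeas n) (hjoint n)
  have hv : ∀ n i, pvar n nx ny νW νF νC i ≠ 0 := by
    intro n i
    have h1 : νW ≠ 0 := by rintro rfl; simp at hνW
    have h2 : νF ≠ 0 := by rintro rfl; simp at hνF
    have h3 : νC ≠ 0 := by rintro rfl; simp at hνC
    rcases i with i | i | i <;> simpa [pvar]
  rw [eventually_and]
  simp only [ae_all_iff]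
  constructor
  · intro k l j j'
    have := as_forms (fun n => PIdx n nx ny) (fun n i ω => pval (W n ω) (F n ω) (C n ω) i)
      (fun n => pvar n nx ny νW νF νC) hG hv (Fin nx) νW νF (fun n a b => .inl (a, b))
      (fun n a k => .inr (.inl (a, k))) (by simp) (by simp) (by simp) (by simp [pvar])
      (by simp [pvar]) k (List.replicate j false ++ List.replicate j' (!false)) l
    filter_upwards [this] with ω h
    rw [wlim_pq] at h
    refine h.congr fun n => ?_
    congr 1
    have := form_eq (wmat (Matrix.of fun a b => GM.ep n * W n ω a b)
      (List.replicate j false ++ List.replicate j' (!false))) (Matrix.of (F n ω)) k l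
    refine this.trans ?_
    rw [wmat_append, Bool.not_false, wmat_replicate_true, wmat_replicate_false, Matrix.mul_assoc,
      ← Matrix.mul_assoc, ← Matrix.transpose_mul, Matrix.mul_apply]
    rfl
  · intro k l j j'
    have := as_forms (fun n => PIdx n nx ny) (fun n i ω => pval (W n ω) (F n ω) (C n ω) i)
      (fun n => pvar n nx ny νW νF νC) hG hv (Fin ny) νW νC (fun n a b => .inl (a, b))
      (fun n a k => .inr (.inr (k, a))) (by simp) (by simp [and_comm]) (by simp) (by simp [pvar])
      (by simp [pvar]) k (List.replicate j true ++ List.replicate j' (!true)) l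
    filter_upwards [this] with ω h
    rw [wlim_pq] at h
    refine h.congr fun n => ?_
    congr 1
    have := form_eq (wmat (Matrix.of fun a b => GM.ep n * W n ω a b)
      (List.replicate j true ++ List.replicate j' (!true))) (Matrix.of (C n ω))ᵀ k l
    refine this.trans ?_
    rw [wmat_append, Bool.not_true, wmat_replicate_true, wmat_replicate_false, Matrix.mul_assoc,
      ← Matrix.mul_assoc, ← Matrix.transpose_mul, Matrix.mul_apply, Matrix.transpose_transpose]
    rfl


theorem lin_rec {n : ℕ} (A : Matrix (Fin n) (Fin n) ℝ) (g u : ℕ → Fin n → ℝ) (h0 : u 0 = g 0)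
    (hs : ∀ t, u (t + 1) = A *ᵥ u t + g (t + 1)) (t : ℕ) :
    u t = ∑ j ∈ Finset.range (t + 1), (A ^ j) *ᵥ g (t - j) := by
  induction t with
  | zero => simp [h0]
  | succ t ih =>
    rw [hs, ih, Finset.sum_range_succ' _ (t + 1), Matrix.mulVec_sum]
    simp [Matrix.mulVec_mulVec, pow_succ']

abbrev Par (n nx ny : ℕ) : Type :=
  (Fin n → Fin n → ℝ) × (Fin n → Fin nx → ℝ) × (Fin ny → Fin n → ℝ)

/-- The rescaled recurrent matrix. -/
noncomputable def rA {n : ℕ} (W : Fin n → Fin n → ℝ) : Matrix (Fin n) (Fin n) ℝ :=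
  Matrix.of fun a b => GM.ep n * W a b

/-- Previous hidden state. -/
noncomputable def rnnHp (n nx : ℕ) (Wm : Fin n → Fin n → ℝ)
    (Fm : Fin n → Fin nx → ℝ) (x : ℕ → Fin nx → ℝ) : ℕ → Fin n → ℝ
  | 0 => 0
  | t + 1 => rnnH n nx Wm Fm x t

theorem rnnH_rec (n nx : ℕ) (Wm : Fin n → Fin n → ℝ)
    (Fm : Fin n → Fin nx → ℝ) (x : ℕ → Fin nx → ℝ) (t : ℕ) :
    rnnH n nx Wm Fm x (t + 1) = rA Wm *ᵥ rnnH n nx Wm Fm x t + Matrix.of Fm *ᵥ x (t + 1) := by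
  funext i
  simp [rnnH, rA, Matrix.mulVec, dotProduct, GM.ep, Finset.mul_sum, mul_assoc]

theorem rnnH_formula (n nx : ℕ) (Wm : Fin n → Fin n → ℝ)
    (Fm : Fin n → Fin nx → ℝ) (x : ℕ → Fin nx → ℝ) (t : ℕ) :
    rnnH n nx Wm Fm x t =
      ∑ j ∈ Finset.range (t + 1), (rA Wm ^ j * Matrix.of Fm) *ᵥ x (t - j) := by
  have := lin_rec (rA Wm) (fun t => Matrix.of Fm *ᵥ x t) (rnnH n nx Wm Fm x)
    (by funext i; simp [rnnH, Matrix.mulVec, dotProduct]) (rnnH_rec n nx Wm Fm x) t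
  simpa [Matrix.mulVec_mulVec] using this

theorem rnnH_diff (n nx ny : ℕ) (x : ℕ → Fin nx → ℝ) (t : ℕ) (i : Fin n) :
    Differentiable ℝ (fun θ : Par n nx ny => rnnH n nx θ.1 θ.2.1 x t i) := by
  induction t generalizing i with
  | zero => simp only [rnnH]; fun_prop
  | succ t ih => simp only [rnnH]; fun_prop

/-- Directional derivative of the hidden state. -/
noncomputable def dH (n nx ny : ℕ) (θ v : Par n nx ny) (x : ℕ → Fin nx → ℝ) (t : ℕ) :
    Fin n → ℝ := fun i => fderiv ℝ (fun θ : Par n nx ny => rnnH n nx θ.1 θ.2.1 x t i) θ v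

theorem hasFDerivAt_rnnH (n nx ny : ℕ) (θ : Par n nx ny) (x : ℕ → Fin nx → ℝ) (t : ℕ)
    (i : Fin n) : HasFDerivAt (fun θ : Par n nx ny => rnnH n nx θ.1 θ.2.1 x t i)
      (fderiv ℝ (fun θ : Par n nx ny => rnnH n nx θ.1 θ.2.1 x t i) θ) θ :=
  (rnnH_diff n nx ny x t i θ).hasFDerivAt

theorem hasLine {E : Type*} [NormedAddCommGroup E] [NormedSpace ℝ E] {f : E → ℝ} {f' : E →L[ℝ] ℝ}
    {θ : E} (h : HasFDerivAt f f' θ) (v : E) :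
    HasDerivAt (fun τ : ℝ => f (θ + τ • v)) (f' v) 0 := by
  have h1 : HasDerivAt (fun τ : ℝ => θ + τ • v) v 0 := by
    simpa using ((hasDerivAt_id (0 : ℝ)).smul_const v).const_add θ
  have h2 : HasFDerivAt f f' (θ + (0 : ℝ) • v) := by simpa using h
  exact h2.comp_hasDerivAt 0 h1

theorem hasLineH (n nx ny : ℕ) (θ v : Par n nx ny) (x : ℕ → Fin nx → ℝ) (t : ℕ) (i : Fin n) :
    HasDerivAt (fun τ : ℝ => rnnH n nx (θ.1 + τ • v.1) (θ.2.1 + τ • v.2.1) x t i)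
      (dH n nx ny θ v x t i) 0 :=
  hasLine (hasFDerivAt_rnnH n nx ny θ x t i) v

theorem hasLin (a b : ℝ) : HasDerivAt (fun τ : ℝ => a + τ * b) b 0 := by
  simpa using ((hasDerivAt_id (0 : ℝ)).mul_const b).const_add a

theorem dH_zero (n nx ny : ℕ) (θ v : Par n nx ny) (x : ℕ → Fin nx → ℝ) :
    dH n nx ny θ v x 0 = Matrix.of v.2.1 *ᵥ x 0 := by
  funext i
  refine (hasLineH n nx ny θ v x 0 i).unique ?_
  simp only [rnnH, Matrix.mulVec, dotProduct, Matrix.of_apply]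
  exact HasDerivAt.fun_sum fun k _ => (hasLin (θ.2.1 i k) (v.2.1 i k)).mul_const (x 0 k)

theorem dH_succ (n nx ny : ℕ) (θ v : Par n nx ny) (x : ℕ → Fin nx → ℝ) (t : ℕ) :
    dH n nx ny θ v x (t + 1) = rA θ.1 *ᵥ dH n nx ny θ v x t +
      (GM.ep n • (Matrix.of v.1 *ᵥ rnnH n nx θ.1 θ.2.1 x t) + Matrix.of v.2.1 *ᵥ x (t + 1)) := by
  funext i
  refine (hasLineH n nx ny θ v x (t + 1) i).unique ?_
  simp only [rnnH]
  have h1 := HasDerivAt.fun_sum (u := Finset.univ) fun k _ =>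
    (hasLin (θ.2.1 i k) (v.2.1 i k)).mul_const (x (t + 1) k)
  have h2 := HasDerivAt.fun_sum (u := Finset.univ) fun i' _ =>
    (hasLin (θ.1 i i') (v.1 i i')).mul (hasLineH n nx ny θ v x t i')
  have h3 := (h2.const_mul (Real.sqrt n)⁻¹).add h1
  refine HasDerivAt.congr_deriv h3 ?_
  simp [rA, Matrix.mulVec, dotProduct, GM.ep, Finset.mul_sum, mul_assoc, Finset.sum_add_distrib,
    mul_add]
  ring

theorem dH_formula (n nx ny : ℕ) (θ v : Par n nx ny) (x : ℕ → Fin nx → ℝ) (t : ℕ) :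
    dH n nx ny θ v x t = ∑ j ∈ Finset.range (t + 1), (rA θ.1 ^ j) *ᵥ
      (GM.ep n • (Matrix.of v.1 *ᵥ rnnHp n nx θ.1 θ.2.1 x (t - j)) +
        Matrix.of v.2.1 *ᵥ x (t - j)) := by
  refine lin_rec (rA θ.1) (fun t => GM.ep n • (Matrix.of v.1 *ᵥ rnnHp n nx θ.1 θ.2.1 x t) +
        Matrix.of v.2.1 *ᵥ x t) (dH n nx ny θ v x) ?_ ?_ t
  · simp [dH_zero, rnnHp]
  · intro t
    rw [dH_succ]
    rfl

theorem fderiv_rnnY (n nx ny : ℕ) (θ v : Par n nx ny) (x : ℕ → Fin nx → ℝ) (t : ℕ) (m : Fin ny) :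
    fderiv ℝ (fun θ' => rnnY n nx ny θ' x t m) θ v =
      GM.ep n * (∑ i, v.2.2 m i * rnnH n nx θ.1 θ.2.1 x t i) +
      GM.ep n * ∑ j ∈ Finset.range (t + 1), ((Matrix.of θ.2.2 * rA θ.1 ^ j) *ᵥ
      (GM.ep n • (Matrix.of v.1 *ᵥ rnnHp n nx θ.1 θ.2.1 x (t - j)) +
        Matrix.of v.2.1 *ᵥ x (t - j))) m := by
  have hd : DifferentiableAt ℝ (fun θ' : Par n nx ny => rnnY n nx ny θ' x t m) θ := by
    have := rnnH_diff n nx ny x t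
    unfold rnnY
    fun_prop
  refine (hasLine hd.hasFDerivAt v).unique ?_
  have h2 := HasDerivAt.fun_sum (u := Finset.univ) fun i _ =>
    (hasLin (θ.2.2 m i) (v.2.2 m i)).mul (hasLineH n nx ny θ v x t i)
  refine HasDerivAt.congr_deriv (h2.const_mul (Real.sqrt n)⁻¹) ?_
  have e : ∑ i, θ.2.2 m i * dH n nx ny θ v x t i = (Matrix.of θ.2.2 *ᵥ dH n nx ny θ v x t) m := by
    simp [Matrix.mulVec, dotProduct]
  rw [dH_formula, Matrix.mulVec_sum, Finset.sum_apply] at e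
  simp only [Matrix.mulVec_mulVec] at e
  rw [← e, ← dH_formula]
  simp [Finset.sum_add_distrib, mul_add, GM.ep]

theorem fderiv_W (n nx ny : ℕ) (θ : Par n nx ny) (x : ℕ → Fin nx → ℝ) (t : ℕ) (m : Fin ny)
    (a b : Fin n) :
    fderiv ℝ (fun θ' => rnnY n nx ny θ' x t m) θ
      ((fun i j => if i = a ∧ j = b then (1 : ℝ) else 0), 0, 0) =
    GM.ep n ^ 2 * ∑ j ∈ Finset.range (t + 1), (Matrix.of θ.2.2 * rA θ.1 ^ j) m a *
      rnnHp n nx θ.1 θ.2.1 x (t - j) b := by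
  rw [fderiv_rnnY]
  have e : ∀ u : Fin n → ℝ, (Matrix.of (fun i j => if i = a ∧ j = b then (1 : ℝ) else 0)) *ᵥ u =
      Pi.single a (u b) := by
    intro u; funext i
    simp [Matrix.mulVec, dotProduct, ite_and, Pi.single_apply]
  have e0 : (Matrix.of (0 : Fin n → Fin nx → ℝ)) = 0 := rfl
  simp only [e, e0, Matrix.zero_mulVec, add_zero, ← Pi.single_smul, Matrix.mulVec_single]
  simp [pow_two, Finset.mul_sum]
  refine Finset.sum_congr rfl fun j _ => ?_
  ring

theorem fderiv_F (n nx ny : ℕ) (θ : Par n nx ny) (x : ℕ → Fin nx → ℝ) (t : ℕ) (m : Fin ny)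
    (a : Fin n) (k : Fin nx) :
    fderiv ℝ (fun θ' => rnnY n nx ny θ' x t m) θ
      (0, (fun i j => if i = a ∧ j = k then (1 : ℝ) else 0), 0) =
    GM.ep n * ∑ j ∈ Finset.range (t + 1), (Matrix.of θ.2.2 * rA θ.1 ^ j) m a * x (t - j) k := by
  rw [fderiv_rnnY]
  have e : ∀ u : Fin nx → ℝ, (Matrix.of (fun i j => if i = a ∧ j = k then (1 : ℝ) else 0)) *ᵥ u =
      Pi.single a (u k) := by
    intro u; funext i
    simp [Matrix.mulVec, dotProduct, ite_and, Pi.single_apply]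
  have e0 : (Matrix.of (0 : Fin n → Fin n → ℝ)) = 0 := rfl
  simp only [e, e0, Matrix.zero_mulVec, smul_zero, zero_add, Matrix.mulVec_single]
  simp [Finset.mul_sum]

theorem fderiv_C (n nx ny : ℕ) (θ : Par n nx ny) (x : ℕ → Fin nx → ℝ) (t : ℕ) (m c : Fin ny)
    (a : Fin n) :
    fderiv ℝ (fun θ' => rnnY n nx ny θ' x t m) θ
      (0, 0, (fun i j => if i = c ∧ j = a then (1 : ℝ) else 0)) =
    if m = c then GM.ep n * rnnH n nx θ.1 θ.2.1 x t a else 0 := by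
  rw [fderiv_rnnY]
  have e0 : (Matrix.of (0 : Fin n → Fin n → ℝ)) = 0 := rfl
  have e1 : (Matrix.of (0 : Fin n → Fin nx → ℝ)) = 0 := rfl
  simp [e0, e1, ite_and]


theorem bil_sum {α β : Type} [Fintype α] [Fintype β] (J J' : Finset ℕ) (p p' : ℕ → α → ℝ)
    (q q' : ℕ → β → ℝ) :
    ∑ a, ∑ b, (∑ j ∈ J, p j a * q j b) * (∑ j ∈ J', p' j a * q' j b) =
      ∑ j ∈ J, ∑ j' ∈ J', (∑ a, p j a * p' j' a) * (∑ b, q j b * q' j' b) := by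
  simp only [Finset.sum_mul_sum]
  have h1 : ∀ a, ∑ b, ∑ j ∈ J, ∑ j' ∈ J', p j a * q j b * (p' j' a * q' j' b) =
      ∑ j ∈ J, ∑ j' ∈ J', ∑ b, p j a * p' j' a * (q j b * q' j' b) := by
    intro a
    rw [Finset.sum_comm]
    refine Finset.sum_congr rfl fun j _ => ?_
    rw [Finset.sum_comm]
    refine Finset.sum_congr rfl fun j' _ => Finset.sum_congr rfl fun b _ => ?_
    ring
  simp only [h1]
  rw [Finset.sum_comm]
  refine Finset.sum_congr rfl fun j _ => ?_
  rw [Finset.sum_comm]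

theorem ntk_formula (n nx ny : ℕ) (θ : Par n nx ny) (x x' : ℕ → Fin nx → ℝ) (t s : ℕ)
    (m m' : Fin ny) :
    rnnNTK n nx ny θ x x' t s m m' =
      (∑ j ∈ Finset.range (t + 1), ∑ j' ∈ Finset.range (s + 1),
        ((n : ℝ)⁻¹ * ∑ a, (Matrix.of θ.2.2 * rA θ.1 ^ j) m a *
          (Matrix.of θ.2.2 * rA θ.1 ^ j') m' a) *
        ((n : ℝ)⁻¹ * ∑ b, rnnHp n nx θ.1 θ.2.1 x (t - j) b *
          rnnHp n nx θ.1 θ.2.1 x' (s - j') b)) +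
      (∑ j ∈ Finset.range (t + 1), ∑ j' ∈ Finset.range (s + 1),
        ((n : ℝ)⁻¹ * ∑ a, (Matrix.of θ.2.2 * rA θ.1 ^ j) m a *
          (Matrix.of θ.2.2 * rA θ.1 ^ j') m' a) * (∑ k, x (t - j) k * x' (s - j') k)) +
      (if m = m' then 1 else 0) *
        ((n : ℝ)⁻¹ * ∑ a, rnnH n nx θ.1 θ.2.1 x t a * rnnH n nx θ.1 θ.2.1 x' s a) := by
  have hep := GM.ep_sq n
  unfold rnnNTK
  congr 1
  · congr 1
    · simp only [fderiv_W]
      have : ∀ A B : ℝ, (GM.ep n ^ 2 * A) * (GM.ep n ^ 2 * B) = ((n : ℝ)⁻¹ * (n : ℝ)⁻¹) * (A * B) := by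
        intro A B; rw [hep]; ring
      simp only [this, ← Finset.mul_sum]
      rw [bil_sum, Finset.mul_sum]
      refine Finset.sum_congr rfl fun j _ => ?_
      rw [Finset.mul_sum]
      refine Finset.sum_congr rfl fun j' _ => ?_
      ring
    · simp only [fderiv_F]
      have : ∀ A B : ℝ, (GM.ep n * A) * (GM.ep n * B) = (n : ℝ)⁻¹ * (A * B) := by
        intro A B; rw [← hep]; ring
      simp only [this, ← Finset.mul_sum]
      rw [bil_sum _ _ _ _ (fun j k => x (t - j) k) (fun j k => x' (s - j) k), Finset.mul_sum]
      refine Finset.sum_congr rfl fun j _ => ?_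
      rw [Finset.mul_sum]
      refine Finset.sum_congr rfl fun j' _ => ?_
      ring
  · simp only [fderiv_C]
    rw [← hep]
    by_cases h : m = m'
    · subst h
      simp only [ite_mul, mul_ite, zero_mul, mul_zero]
      rw [Finset.sum_eq_single m]
      · simp [Finset.mul_sum]
        refine Finset.sum_congr rfl fun j _ => ?_
        ring
      · intro c _ hc
        simp [Ne.symm hc]
      · simp
    · rw [if_neg h, zero_mul]
      refine Finset.sum_eq_zero fun c _ => Finset.sum_eq_zero fun a _ => ?_
      by_cases h1 : m = c
      · rw [if_neg (fun h2 : m' = c => h (h1.trans h2.symm)), mul_zero]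
      · rw [if_neg h1, zero_mul]

theorem hh_formula (n nx : ℕ) (W : Fin n → Fin n → ℝ) (F : Fin n → Fin nx → ℝ)
    (x x' : ℕ → Fin nx → ℝ) (t s : ℕ) :
    (n : ℝ)⁻¹ * ∑ a, rnnH n nx W F x t a * rnnH n nx W F x' s a =
    ∑ j ∈ Finset.range (t + 1), ∑ j' ∈ Finset.range (s + 1), ∑ k, ∑ l,
      ((n : ℝ)⁻¹ * ∑ i, (rA W ^ j * Matrix.of F) i k * (rA W ^ j' * Matrix.of F) i l) *
        (x (t - j) k * x' (s - j') l) := by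
  simp only [rnnH_formula, Finset.sum_apply, Finset.sum_mul_sum]
  rw [Finset.sum_comm, Finset.mul_sum]
  refine Finset.sum_congr rfl fun j _ => ?_
  rw [Finset.sum_comm, Finset.mul_sum]
  refine Finset.sum_congr rfl fun j' _ => ?_
  simp only [Matrix.mulVec, dotProduct, Finset.sum_mul_sum]
  rw [Finset.sum_comm, Finset.mul_sum]
  refine Finset.sum_congr rfl fun k _ => ?_
  rw [Finset.sum_comm, Finset.mul_sum]
  refine Finset.sum_congr rfl fun l _ => ?_
  rw [mul_assoc, Finset.sum_mul]
  congr 1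
  refine Finset.sum_congr rfl fun i _ => ?_
  ring

/-- Inner product of two inputs. -/
def inn {nx : ℕ} (x x' : ℕ → Fin nx → ℝ) (t s : ℕ) : ℝ := ∑ k, x t k * x' s k

/-- Limit covariance of the hidden states. -/
def limH {nx : ℕ} (νW νF : ℝ) (x x' : ℕ → Fin nx → ℝ) (t s : ℕ) : ℝ :=
  ∑ j ∈ Finset.range (min t s + 1), νF * νW ^ j * inn x x' (t - j) (s - j)

/-- Shifted limit covariance. -/
def limHp {nx : ℕ} (νW νF : ℝ) (x x' : ℕ → Fin nx → ℝ) (t s : ℕ) : ℝ :=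
  ∑ j ∈ Finset.range (min t s), νF * νW ^ j * inn x x' (t - 1 - j) (s - 1 - j)

theorem diag_sum (t s : ℕ) (f : ℕ → ℕ → ℝ) :
    ∑ j ∈ Finset.range (t + 1), ∑ j' ∈ Finset.range (s + 1), (if j = j' then f j j' else 0) =
      ∑ j ∈ Finset.range (min t s + 1), f j j := by
  simp only [Finset.sum_ite_eq, Finset.mem_range]
  rw [← Finset.sum_filter]
  refine Finset.sum_congr ?_ fun _ _ => rfl
  ext j
  simp

theorem tri_sum (M : ℕ) (f : ℕ → ℝ) :
    ∑ j ∈ Finset.range (M + 1), ∑ i ∈ Finset.range (M - j), f (i + j + 1) =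
      ∑ J ∈ Finset.range (M + 1), (J : ℝ) * f J := by
  induction M with
  | zero => simp
  | succ M ih =>
    rw [Finset.sum_range_succ, Finset.sum_range_succ _ (M + 1), ← ih]
    have : ∀ j ∈ Finset.range (M + 1), ∑ i ∈ Finset.range (M + 1 - j), f (i + j + 1) =
        ∑ i ∈ Finset.range (M - j), f (i + j + 1) + f (M + 1) := by
      intro j hj
      have hj' : j ≤ M := by simpa [Nat.lt_succ_iff] using hj
      rw [Nat.succ_sub hj', Finset.sum_range_succ, Nat.sub_add_cancel hj']
    rw [Finset.sum_congr rfl this, Finset.sum_add_distrib]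
    simp

section limits
variable {nx ny : ℕ} {νW νF νC : ℝ} (W : (n : ℕ) → (Fin n → Fin n → ℝ))
    (F : (n : ℕ) → (Fin n → Fin nx → ℝ)) (C : (n : ℕ) → (Fin ny → Fin n → ℝ))
    (x x' : ℕ → Fin nx → ℝ)

theorem lim_hh (hF : ∀ (k l : Fin nx) (j j' : ℕ), Tendsto (fun n : ℕ => (n : ℝ)⁻¹ *
        ∑ i, (rA (W n) ^ j * Matrix.of (F n)) i k *
          (rA (W n) ^ j' * Matrix.of (F n)) i l) atTop
        (nhds ((if k = l then νF else 0) * (if j = j' then νW ^ j else 0)))) (t s : ℕ) :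
    Tendsto (fun n : ℕ => (n : ℝ)⁻¹ * ∑ a, rnnH n nx (W n) (F n) x t a *
      rnnH n nx (W n) (F n) x' s a) atTop (nhds (limH νW νF x x' t s)) := by
  simp only [hh_formula]
  have e : limH νW νF x x' t s = ∑ j ∈ Finset.range (t + 1), ∑ j' ∈ Finset.range (s + 1),
      ∑ k, ∑ l, ((if k = l then νF else 0) * (if j = j' then νW ^ j else 0)) *
        (x (t - j) k * x' (s - j') l) := by
    rw [limH, ← diag_sum t s (fun j j' => νF * νW ^ j * inn x x' (t - j) (s - j'))]
    refine Finset.sum_congr rfl fun j _ => Finset.sum_congr rfl fun j' _ => ?_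
    by_cases h : j = j'
    · simp [h, inn, Finset.mul_sum]
    · simp [h]
  rw [e]
  exact tendsto_finsetSum _ fun j _ => tendsto_finsetSum _ fun j' _ =>
    tendsto_finsetSum _ fun k _ => tendsto_finsetSum _ fun l _ => (hF k l j j').mul_const _

theorem lim_hph (hF : ∀ (k l : Fin nx) (j j' : ℕ), Tendsto (fun n : ℕ => (n : ℝ)⁻¹ *
        ∑ i, (rA (W n) ^ j * Matrix.of (F n)) i k *
          (rA (W n) ^ j' * Matrix.of (F n)) i l) atTop
        (nhds ((if k = l then νF else 0) * (if j = j' then νW ^ j else 0)))) (t s : ℕ) :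
    Tendsto (fun n : ℕ => (n : ℝ)⁻¹ * ∑ a, rnnHp n nx (W n) (F n) x t a *
      rnnHp n nx (W n) (F n) x' s a) atTop (nhds (limHp νW νF x x' t s)) := by
  rcases t with _ | t
  · simp [rnnHp, limHp]
  rcases s with _ | s
  · simp [rnnHp, limHp]
  have := lim_hh W F x x' hF t s
  simpa [rnnHp, limHp, limH] using this

theorem lim_ntk (hF : ∀ (k l : Fin nx) (j j' : ℕ), Tendsto (fun n : ℕ => (n : ℝ)⁻¹ *
        ∑ i, (rA (W n) ^ j * Matrix.of (F n)) i k *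
          (rA (W n) ^ j' * Matrix.of (F n)) i l) atTop
        (nhds ((if k = l then νF else 0) * (if j = j' then νW ^ j else 0))))
    (hC : ∀ (k l : Fin ny) (j j' : ℕ), Tendsto (fun n : ℕ => (n : ℝ)⁻¹ *
        ∑ i, (Matrix.of (C n) * rA (W n) ^ j) k i *
          (Matrix.of (C n) * rA (W n) ^ j') l i) atTop
        (nhds ((if k = l then νC else 0) * (if j = j' then νW ^ j else 0))))
    (t s : ℕ) (m m' : Fin ny) :
    Tendsto (fun n : ℕ => rnnNTK n nx ny (W n, F n, C n) x x' t s m m') atTop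
      (nhds ((∑ j ∈ Finset.range (min t s + 1),
        (νC * (j * νF * νW ^ (j - 1) + νW ^ j) + νF * νW ^ j) * inn x x' (t - j) (s - j)) *
        (if m = m' then 1 else 0))) := by
  simp only [ntk_formula]
  have key := ((tendsto_finsetSum (Finset.range (t + 1)) fun j _ =>
    tendsto_finsetSum (Finset.range (s + 1)) fun j' _ =>
      (hC m m' j j').mul (lim_hph W F x x' hF (t - j) (s - j'))).add
    (tendsto_finsetSum (Finset.range (t + 1)) fun j _ =>
    tendsto_finsetSum (Finset.range (s + 1)) fun j' _ =>
      (hC m m' j j').mul_const (inn x x' (t - j) (s - j')))).add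
    ((lim_hh W F x x' hF t s).const_mul (if m = m' then (1 : ℝ) else 0))
  refine Eq.subst (motive := fun z : ℝ => Tendsto _ atTop (nhds z)) ?_ key
  symm
  by_cases hm : m = m'
  · have e1 : ∀ g : ℕ → ℕ → ℝ, ∑ j ∈ Finset.range (t + 1), ∑ j' ∈ Finset.range (s + 1),
        νC * (if j = j' then νW ^ j else 0) * g j j' =
        ∑ j ∈ Finset.range (min t s + 1), νC * νW ^ j * g j j := by
      intro g
      rw [← diag_sum t s (fun j j' => νC * νW ^ j * g j j')]
      refine Finset.sum_congr rfl fun j _ => Finset.sum_congr rfl fun j' _ => ?_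
      split_ifs <;> simp
    simp only [hm, if_true, mul_one, one_mul]
    rw [e1 (fun j j' => limHp νW νF x x' (t - j) (s - j')),
      e1 (fun j j' => inn x x' (t - j) (s - j'))]
    have e2 : ∑ j ∈ Finset.range (min t s + 1),
        νC * νW ^ j * limHp νW νF x x' (t - j) (s - j) =
        ∑ J ∈ Finset.range (min t s + 1), (J : ℝ) *
          (νC * νF * νW ^ (J - 1) * inn x x' (t - J) (s - J)) := by
      rw [← tri_sum (min t s) (fun J => νC * νF * νW ^ (J - 1) * inn x x' (t - J) (s - J))]
      refine Finset.sum_congr rfl fun j _ => ?_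
      rw [limHp, Finset.mul_sum, show min (t - j) (s - j) = min t s - j by omega]
      refine Finset.sum_congr rfl fun i _ => ?_
      rw [show t - j - 1 - i = t - (i + j + 1) by omega,
        show s - j - 1 - i = s - (i + j + 1) by omega, Nat.add_sub_cancel, pow_add]
      ring
    rw [e2, limH, ← Finset.sum_add_distrib, ← Finset.sum_add_distrib]
    refine Finset.sum_congr rfl fun j _ => ?_
    ring
  · simp [hm]

theorem target_eq (T : ℕ) (ρ : ℕ → ℝ) (t s : Fin T) (m m' : Fin ny) :
    Matrix.kroneckerMap (· * ·) ((toepMat T nx x)ᵀ * scaleMat T nx ρ * toepMat T nx x')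
      (1 : Matrix (Fin ny) (Fin ny) ℝ) (t, m) (s, m') =
    (∑ j ∈ Finset.range (min (t : ℕ) s + 1), ρ j * inn x x' (t - j) (s - j)) *
      (if m = m' then 1 else 0) := by
  rw [Matrix.kroneckerMap_apply, Matrix.one_apply]
  congr 1
  rw [scaleMat, Matrix.mul_apply, Fintype.sum_prod_type]
  simp only [Matrix.mul_diagonal, Matrix.transpose_apply, toepMat, Matrix.of_apply]
  have e : ∀ j : Fin T, ∑ k : Fin nx, (if (j : ℕ) ≤ t then x (t - j) k else 0) * ρ j *
      (if (j : ℕ) ≤ s then x' (s - j) k else 0) =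
      (fun j : ℕ => if j ≤ min (t : ℕ) s then ρ j * inn x x' (t - j) (s - j) else 0) j := by
    intro j
    by_cases h1 : (j : ℕ) ≤ t <;> by_cases h2 : (j : ℕ) ≤ s <;> simp [h1, h2, -Fin.val_fin_le]
    rw [inn, Finset.mul_sum]
    refine Finset.sum_congr rfl fun k _ => ?_
    ring
  rw [Finset.sum_congr rfl fun j _ => e j,
    Fin.sum_univ_eq_sum_range
      (fun j : ℕ => if j ≤ min (t : ℕ) s then ρ j * inn x x' (t - j) (s - j) else 0) T,
    ← Finset.sum_filter]
  refine Finset.sum_congr ?_ fun _ _ => rfl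
  ext j
  simp only [Finset.mem_filter, Finset.mem_range]
  omega

end limits

/-- In the infinite-width limit, the NTK of the linear RNN with
parameters `(W,F,C)` initialized i.i.d. `N(0,ν_W)`, `N(0,ν_F)`, `N(0,ν_C)`
converges almost surely to `𝒯(x)ᵀ D(ρ) 𝒯(x') ⊗ I_{n_y}` with
`ρ_j = ν_C (j ν_F ν_W^{j-1} + ν_W^j) + ν_F ν_W^j`: the linear RNN NTK is the NTK
of a scaled 1D convolutional model with these scale factors. -/
theorem rnn_ntk_limit (nx ny T : ℕ) (νW νF νC : NNReal)
    (hνW : 0 < (νW : ℝ)) (hνF : 0 < (νF : ℝ)) (hνC : 0 < (νC : ℝ))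
    (Ω : Type*) [MeasureSpace Ω] [IsProbabilityMeasure (ℙ : Measure Ω)]
    (W : (n : ℕ) → Ω → (Fin n → Fin n → ℝ))
    (F : (n : ℕ) → Ω → (Fin n → Fin nx → ℝ))
    (C : (n : ℕ) → Ω → (Fin ny → Fin n → ℝ))
    (hWmeas : ∀ n, Measurable (W n)) (hFmeas : ∀ n, Measurable (F n))
    (hCmeas : ∀ n, Measurable (C n))
    (hjoint : ∀ n, Measure.map (fun ω => (W n ω, F n ω, C n ω)) ℙ =
      (Measure.pi fun _ : Fin n => Measure.pi fun _ : Fin n => gaussianReal 0 νW).prod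
        ((Measure.pi fun _ : Fin n => Measure.pi fun _ : Fin nx =>
            gaussianReal 0 νF).prod
          (Measure.pi fun _ : Fin ny => Measure.pi fun _ : Fin n =>
            gaussianReal 0 νC)))
    (x x' : ℕ → Fin nx → ℝ) :
    ∀ᵐ ω ∂(ℙ : Measure Ω), ∀ (t s : Fin T) (m m' : Fin ny),
      Tendsto (fun n : ℕ =>
          rnnNTK n nx ny (W n ω, F n ω, C n ω) x x' (t : ℕ) (s : ℕ) m m')
        atTop
        (nhds (Matrix.kroneckerMap (· * ·)
          ((toepMat T nx x)ᵀ *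
            scaleMat T nx (fun j =>
              (νC : ℝ) * (j * νF * (νW : ℝ) ^ (j - 1) + (νW : ℝ) ^ j) +
                (νF : ℝ) * (νW : ℝ) ^ j) *
            toepMat T nx x')
          (1 : Matrix (Fin ny) (Fin ny) ℝ) (t, m) (s, m'))) := by
  filter_upwards [as_all nx ny νW νF νC hνW hνF hνC Ω W F C hWmeas hFmeas hCmeas hjoint]
    with ω hω t s m m'
  rw [target_eq]
  exact lim_ntk (fun n => W n ω) (fun n => F n ω) (fun n => C n ω) x x' hω.1 hω.2 t s m m'
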